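/- Let Q be a graph class with Q̂ nonempty, and let s = sup_{W∈Q̂} Ent(W). Then for every ε > 0 there exists N such that for all n ≥ N, |Q_n| ≤ 2^{(s+ε)·C(n,2)}, where |Q_n| is the number of labelled graphs on {1,…,n} in Q and C(n,2) = n(n-1)/2. -/

import Mathlib

open MeasureTheory Set Filter

noncomputable section

/-- A graphon: a symmetric measurable function `ℝ → ℝ → ℝ` with values in `[0,1]`
(only its values on `[0,1]²` matter). -/
def IsGraphon (W : ℝ → ℝ → ℝ) : Prop :=
  (∀ x y, W x y = W y x) ∧ Measurable (Function.uncurry W) ∧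
    ∀ x y, W x y ∈ Set.Icc (0 : ℝ) 1

/-- The cut norm `‖U‖_□`, the supremum over measurable `S, T ⊆ [0,1]` of
`|∫_{S×T} U|`. -/
def cutNorm (U : ℝ → ℝ → ℝ) : ℝ :=
  sSup { r : ℝ | ∃ S T : Set ℝ, MeasurableSet S ∧ MeasurableSet T ∧
    S ⊆ Set.Icc 0 1 ∧ T ⊆ Set.Icc 0 1 ∧
    r = |∫ p in S ×ˢ T, U p.1 p.2| }

/-- `d_□(W₁, W₂) = ‖W₁ - W₂‖_□`. -/
def dCut (W₁ W₂ : ℝ → ℝ → ℝ) : ℝ := cutNorm (fun x y => W₁ x y - W₂ x y)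

/-- A Lebesgue-measure-preserving map `[0,1] → [0,1]`. -/
def IsMPSelf (σ : ℝ → ℝ) : Prop :=
  MeasureTheory.MeasurePreserving σ
      (MeasureTheory.volume.restrict (Set.Icc (0:ℝ) 1))
      (MeasureTheory.volume.restrict (Set.Icc (0:ℝ) 1)) ∧
    Set.MapsTo σ (Set.Icc (0:ℝ) 1) (Set.Icc (0:ℝ) 1)

/-- The cut distance `δ_□(W₁, W₂)`. -/
def deltaCut (W₁ W₂ : ℝ → ℝ → ℝ) : ℝ :=
  sInf { r : ℝ | ∃ σ₁ σ₂ : ℝ → ℝ, IsMPSelf σ₁ ∧ IsMPSelf σ₂ ∧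
    r = cutNorm (fun x y => W₁ (σ₁ x) (σ₁ y) - W₂ (σ₂ x) (σ₂ y)) }

/-- The binary entropy function `h` (base-2 logarithm; `logb 2 0 = 0` by convention,
so `h 0 = h 1 = 0`). -/
def binEnt (x : ℝ) : ℝ := -x * Real.logb 2 x - (1 - x) * Real.logb 2 (1 - x)

/-- `h̃ x = h (min x (1/2))`. -/
def htilde (x : ℝ) : ℝ := binEnt (min x (1/2))

/-- The entropy `Ent(W) = ∫₀¹∫₀¹ h(W(x,y)) dx dy` of a graphon. -/
def graphonEnt (W : ℝ → ℝ → ℝ) : ℝ :=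
  ∫ x in Set.Icc (0:ℝ) 1, ∫ y in Set.Icc (0:ℝ) 1, binEnt (W x y)

open Classical in
/-- The graphon `W_G` of a simple graph `G` on `{1, …, n}` (vertices as `Fin n`,
vertex `i : Fin n` representing `i+1`): `W_G x y = 1` iff `⌈nx⌉⌈ny⌉ ∈ E(G)`. -/
def graphonOfGraph {n : ℕ} (G : SimpleGraph (Fin n)) : ℝ → ℝ → ℝ := fun x y =>
  if ∃ i j : Fin n, G.Adj i j ∧ ⌈(n : ℝ) * x⌉ = ((i : ℕ) : ℤ) + 1 ∧
      ⌈(n : ℝ) * y⌉ = ((j : ℕ) : ℤ) + 1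
  then 1 else 0

/-- A labelled graph class: a set of graphs on `{1,…,n}` for each `n`. -/
abbrev GraphClass := ∀ n : ℕ, Set (SimpleGraph (Fin n))

/-- A graph class is closed under relabelling by permutations. -/
def IsGraphClass (Q : GraphClass) : Prop :=
  ∀ (n : ℕ) (π : Equiv.Perm (Fin n)) (G : SimpleGraph (Fin n)),
    G ∈ Q n → G.comap ⇑π ∈ Q n

/-- A hereditary graph class: a graph class closed under taking induced subgraphs
(relabelled by the order-preserving bijection). -/
def IsHereditary (Q : GraphClass) : Prop :=
  IsGraphClass Q ∧
    ∀ (m n : ℕ) (f : Fin m → Fin n), StrictMono f →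
      ∀ G ∈ Q n, G.comap f ∈ Q m

/-- `Q̂`: the set of graphons which are limits (in cut distance) of sequences of graphs in
the class `Q` whose orders tend to infinity. -/
def limitSet (Q : GraphClass) : Set (ℝ → ℝ → ℝ) :=
  { W | IsGraphon W ∧
    ∃ (nk : ℕ → ℕ) (Gk : ∀ k, SimpleGraph (Fin (nk k))),
      (∀ k, Gk k ∈ Q (nk k)) ∧ Filter.Tendsto nk Filter.atTop Filter.atTop ∧
      Filter.Tendsto (fun k => deltaCut (graphonOfGraph (Gk k)) W) Filter.atTop (nhds 0) }

/-- `C(n,2) = n(n-1)/2` as a real number. -/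
def choose2 (n : ℕ) : ℝ := (n : ℝ) * ((n : ℝ) - 1) / 2

open Classical in
/-- The step function `E[W | P]` obtained by averaging `W` over the products of the
parts of the partition `P` of `[0,1]`. -/
def condExpPart {k : ℕ} (P : Fin k → Set ℝ) (W : ℝ → ℝ → ℝ) : ℝ → ℝ → ℝ := fun x y =>
  ∑ i : Fin k, ∑ j : Fin k,
    if x ∈ P i ∧ y ∈ P j then ⨍ p in (P i) ×ˢ (P j), W p.1 p.2 else 0

/-- `W̄_n`: the step function of `W` for the partition of `[0,1]` into `n` consecutive
intervals of length `1/n`. -/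
def barStep (n : ℕ) (W : ℝ → ℝ → ℝ) : ℝ → ℝ → ℝ :=
  condExpPart (fun i : Fin n => Set.Ioc (((i : ℕ) : ℝ)/n) ((((i : ℕ) : ℝ) + 1)/n)) W

/-- `N̂_□(n, δ; W)`: the number of graphs `G` on `{1,…,n}` with `d_□(W_G, W) ≤ δ`. -/
def NhatCut (n : ℕ) (δ : ℝ) (W : ℝ → ℝ → ℝ) : ℕ :=
  Nat.card {G : SimpleGraph (Fin n) // dCut (graphonOfGraph G) W ≤ δ}

/-- `N_□(n, δ; W)`: the number of graphs `G` on `{1,…,n}` with `δ_□(W_G, W) ≤ δ`. -/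
def NCut (n : ℕ) (δ : ℝ) (W : ℝ → ℝ → ℝ) : ℕ :=
  Nat.card {G : SimpleGraph (Fin n) // deltaCut (graphonOfGraph G) W ≤ δ}

open Classical in
/-- The induced density `p(F; W)` of a graph `F` on `{1,…,k}` in a graphon `W`. -/
def inducedDensity {k : ℕ} (F : SimpleGraph (Fin k)) (W : ℝ → ℝ → ℝ) : ℝ :=
  ∫ x : Fin k → ℝ in Set.univ.pi (fun _ : Fin k => Set.Icc (0:ℝ) 1),
    ∏ i : Fin k, ∏ j : Fin k,
      if i < j then (if F.Adj i j then W (x i) (x j) else 1 - W (x i) (x j)) else 1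

open Classical in
/-- The randomness support graphon `1_{rand(W)}` of `W`. -/
def randIndicator (W : ℝ → ℝ → ℝ) : ℝ → ℝ → ℝ := fun x y =>
  if 0 < W x y ∧ W x y < 1 then 1 else 0

/-- A kernel `U` is `K_r`-free if `∏_{i<j} U(x_i, x_j) = 0` for a.e. `x ∈ [0,1]^r`. -/
def KFree (r : ℕ) (U : ℝ → ℝ → ℝ) : Prop :=
  ∀ᵐ x ∂(MeasureTheory.volume.restrict (Set.univ.pi fun _ : Fin r => Set.Icc (0:ℝ) 1)),
    (∏ i : Fin r, ∏ j : Fin r, if i < j then U (x i) (x j) else 1) = 0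

open Classical in
/-- The graphon `W^{(r,s)}`: equal to `1/2` off the diagonal blocks, `1` on the first `s`
diagonal blocks `I_i × I_i`, and `0` on the remaining diagonal blocks. -/
def Wrs (r s : ℕ) : ℝ → ℝ → ℝ := fun x y =>
  if ∃ i j : Fin r, i ≠ j ∧ x ∈ Set.Ioc (((i:ℕ):ℝ)/r) ((((i:ℕ):ℝ)+1)/r) ∧
      y ∈ Set.Ioc (((j:ℕ):ℝ)/r) ((((j:ℕ):ℝ)+1)/r)
  then 1/2
  else if ∃ i : Fin r, (i:ℕ) < s ∧ x ∈ Set.Ioc (((i:ℕ):ℝ)/r) ((((i:ℕ):ℝ)+1)/r) ∧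
      y ∈ Set.Ioc (((i:ℕ):ℝ)/r) ((((i:ℕ):ℝ)+1)/r)
  then 1 else 0

/-- `E_r = ⋃_{i ≠ j} I_i × I_j` where `I_i`, `i = 1, …, r`, are the consecutive
intervals of length `1/r` in `[0,1]`. -/
def Er (r : ℕ) : Set (ℝ × ℝ) :=
  ⋃ (i : Fin r) (j : Fin r) (_ : i ≠ j),
    (Set.Ioc (((i:ℕ):ℝ)/r) ((((i:ℕ):ℝ)+1)/r)) ×ˢ (Set.Ioc (((j:ℕ):ℝ)/r) ((((j:ℕ):ℝ)+1)/r))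

/-- `R_r`: the set of graphons equal to `1/2` on `E_r` and `{0,1}`-valued elsewhere
on `[0,1]²`. -/
def Rset (r : ℕ) : Set (ℝ → ℝ → ℝ) :=
  { W | IsGraphon W ∧ (∀ p ∈ Er r, W p.1 p.2 = 1/2) ∧
      ∀ p ∈ ((Set.Icc (0:ℝ) 1) ×ˢ (Set.Icc (0:ℝ) 1)) \ Er r,
        W p.1 p.2 = 0 ∨ W p.1 p.2 = 1 }

/-- A graphon is random-free if it is `{0,1}`-valued a.e. on `[0,1]²`. -/
def IsRandomFree (W : ℝ → ℝ → ℝ) : Prop :=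
  ∀ᵐ p ∂(MeasureTheory.volume.restrict ((Set.Icc (0:ℝ) 1) ×ˢ (Set.Icc (0:ℝ) 1))),
    W (Prod.fst p) (Prod.snd p) = 0 ∨ W (Prod.fst p) (Prod.snd p) = 1

/-!
By Frieze–Kannan weak regularity, every graph on `n` vertices is, up to a small error in cut norm, a
sample of a stochastic block model with boundedly many blocks and edge probabilities from a finite
palette; there are only `2 ^ O(n)` such models. Coding a graph with its block model takes about the
entropy of the model many bits, so by Kraft's inequality a class containing more than
`2 ^ ((t + ε) * choose2 n)` graphs contains one none of whose block models has entropy much below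
`t`. Do this for ever finer models along `n → ∞`. After relabelling the vertices so that the blocks
are intervals, the models of a fixed resolution form a compact family, hence along an ultrafilter
the graphs converge in cut norm to the weak limit `W` of their finest models. Then `W` is a limit of
the class, and `t ≤ Ent(W)` because the entropy is upper semicontinuous for weak convergence: by
Gibbs' inequality it is an infimum of functionals affine in the graphon.
-/

open scoped BigOperators Topology

section FiberMean

variable {α κ κ' : Type*} [DecidableEq κ'] [DecidableEq κ] [Fintype α]

/-- The mean of `f` over the fibre of `c` over `k`; it is `0` if that fibre is empty. -/
def fiberMean (c : α → κ) (f : α → ℝ) (k : κ) : ℝ := 𝔼 i with c i = k, f i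

/-- The energy of the partition of `α` into the fibres of `c` with respect to `f`: the squared
`ℓ²`-norm of `f` averaged over the fibres. -/
def fiberEnergy (c : α → κ) (f : α → ℝ) : ℝ := ∑ i, fiberMean c f (c i) ^ 2

theorem fiberMean_mem_Icc (c : α → κ) {f : α → ℝ} (hf : ∀ i, f i ∈ Icc (0 : ℝ) 1) (k : κ) :
    fiberMean c f k ∈ Icc (0 : ℝ) 1 := by
  refine ⟨Finset.expect_nonneg fun i _ => (hf i).1, ?_⟩
  rcases Finset.eq_empty_or_nonempty {i | c i = k} with hk | hk
  · simp [fiberMean, hk]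
  · exact Finset.expect_le hk fun i _ => (hf i).2

theorem sum_fiberMean_mul (c : α → κ) (f : α → ℝ) (φ : κ → ℝ) :
    ∑ i, fiberMean c f (c i) * φ (c i) = ∑ i, f i * φ (c i) := by
  have hc : ∀ i ∈ Finset.univ, c i ∈ Finset.univ.image c := fun i hi => Finset.mem_image_of_mem c hi
  rw [← Finset.sum_fiberwise_of_maps_to hc, ← Finset.sum_fiberwise_of_maps_to hc]
  refine Finset.sum_congr rfl fun k _ => ?_
  calc ∑ i with c i = k, fiberMean c f (c i) * φ (c i)
      = ∑ i with c i = k, fiberMean c f k * φ k :=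
        Finset.sum_congr rfl fun i hi => by rw [(Finset.mem_filter.1 hi).2]
    _ = (∑ i with c i = k, f i) * φ k := by
        rw [Finset.sum_const, ← smul_mul_assoc, fiberMean, Finset.card_smul_expect]
    _ = ∑ i with c i = k, f i * φ (c i) := by
        rw [Finset.sum_mul]
        exact Finset.sum_congr rfl fun i hi => by rw [(Finset.mem_filter.1 hi).2]

theorem fiberEnergy_nonneg (c : α → κ) (f : α → ℝ) : 0 ≤ fiberEnergy c f :=
  Finset.sum_nonneg fun _ _ => sq_nonneg _

theorem fiberEnergy_le_card (c : α → κ) {f : α → ℝ} (hf : ∀ i, f i ∈ Icc (0 : ℝ) 1) :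
    fiberEnergy c f ≤ Fintype.card α := by
  have hi : ∀ i ∈ Finset.univ, fiberMean c f (c i) ^ 2 ≤ 1 := fun i _ =>
    pow_le_one₀ (fiberMean_mem_Icc c hf _).1 (fiberMean_mem_Icc c hf _).2
  simpa [fiberEnergy] using Finset.sum_le_sum hi

theorem sum_sq_fiberMean_sub (c : α → κ) (c' : α → κ') (r : κ' → κ) (hr : ∀ i, c i = r (c' i))
    (f : α → ℝ) :
    ∑ i, (fiberMean c' f (c' i) - fiberMean c f (c i)) ^ 2 =
      fiberEnergy c' f - fiberEnergy c f := by
  have hfine : ∑ i, fiberMean c' f (c' i) * fiberMean c f (c i) =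
      ∑ i, f i * fiberMean c f (c i) := by
    simpa only [hr] using sum_fiberMean_mul c' f fun k => fiberMean c f (r k)
  have hcoarse := sum_fiberMean_mul c f (fiberMean c f)
  simp only [fiberEnergy, sub_sq, Finset.sum_add_distrib, Finset.sum_sub_distrib, mul_assoc,
    ← Finset.mul_sum]
  simp only [← sq] at hcoarse
  linarith

/-- The energy increment inequality: a test function correlating with the deviation of `f` from
its fibre means raises the energy of any refinement on which it is constant. -/
theorem sq_sum_sub_fiberMean_mul_le (c : α → κ) (c' : α → κ') (r : κ' → κ)
    (hr : ∀ i, c i = r (c' i)) (f : α → ℝ) {φ : κ' → ℝ} (hφ : ∀ k, |φ k| ≤ 1) :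
    (∑ i, (f i - fiberMean c f (c i)) * φ (c' i)) ^ 2 ≤
      Fintype.card α * (fiberEnergy c' f - fiberEnergy c f) := by
  have hφ1 : ∑ i, φ (c' i) ^ 2 ≤ Fintype.card α := by
    simpa using Finset.sum_le_sum fun i (_ : i ∈ Finset.univ) =>
      (sq_le_one_iff_abs_le_one _).2 (hφ (c' i))
  calc (∑ i, (f i - fiberMean c f (c i)) * φ (c' i)) ^ 2
      = (∑ i, (fiberMean c' f (c' i) - fiberMean c f (c i)) * φ (c' i)) ^ 2 := by
        simp only [sub_mul, Finset.sum_sub_distrib, sum_fiberMean_mul c' f φ]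
    _ ≤ (∑ i, (fiberMean c' f (c' i) - fiberMean c f (c i)) ^ 2) * ∑ i, φ (c' i) ^ 2 :=
        Finset.sum_mul_sq_le_sq_mul_sq _ _ _
    _ ≤ Fintype.card α * (fiberEnergy c' f - fiberEnergy c f) := by
        rw [mul_comm, ← sum_sq_fiberMean_sub c c' r hr f]
        gcongr

end FiberMean

section WeakRegularity

variable {V : Type*}

/-- `D` has cut norm at most `C`, for matrices with counting measure on the index set. -/
def CutBounded (D : V → V → ℝ) (C : ℝ) : Prop :=
  ∀ S T : Finset V, |∑ v ∈ S, ∑ w ∈ T, D v w| ≤ C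

theorem CutBounded.add {D E : V → V → ℝ} {C C' : ℝ} (hD : CutBounded D C)
    (hE : CutBounded E C') : CutBounded (fun v w => D v w + E v w) (C + C') := fun S T => by
  simp only [Finset.sum_add_distrib]
  exact (abs_add_le _ _).trans (add_le_add (hD S T) (hE S T))

/-- A sequence of codes with values in `{0, …, 4 ^ i - 1}`, each refining the previous one by one
base-`4` digit. -/
structure IsRefiningSeq (c : ℕ → V → ℕ) : Prop where
  zero : ∀ v, c 0 v = 0
  succ_div : ∀ i v, c (i + 1) v / 4 = c i v

theorem IsRefiningSeq.lt_pow {c : ℕ → V → ℕ} (hc : IsRefiningSeq c) (i : ℕ) (v : V) :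
    c i v < 4 ^ i := by
  induction i with
  | zero => simp [hc.zero]
  | succ i ih => rw [pow_succ, ← Nat.div_lt_iff_lt_mul (by norm_num), hc.succ_div]; exact ih

theorem IsRefiningSeq.div_pow {c : ℕ → V → ℕ} (hc : IsRefiningSeq c) (i j : ℕ) (v : V) :
    c (i + j) v / 4 ^ j = c i v := by
  induction j with
  | zero => simp
  | succ j ih => rw [pow_succ', ← Nat.div_div_eq_div_mul, ← add_assoc, hc.succ_div, ih]

variable [Fintype V]

/-- The mean of the entries of `A` in the block with index `(a, b)` of the partition of `V × V`
induced by the code `c`. -/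
def blockMean (c : V → ℕ) (A : V → V → ℝ) (a b : ℕ) : ℝ :=
  fiberMean (Prod.map c c) (Function.uncurry A) (a, b)

/-- The energy of the partition of `V × V` induced by the code `c` with respect to `A`. -/
def blockEnergy (c : V → ℕ) (A : V → V → ℝ) : ℝ :=
  fiberEnergy (Prod.map c c) (Function.uncurry A)

theorem blockMean_comm (c : V → ℕ) {A : V → V → ℝ} (hA : ∀ v w, A v w = A w v) (a b : ℕ) :
    blockMean c A a b = blockMean c A b a :=
  Finset.expect_equiv (Equiv.prodComm V V)
    (fun p => by simp [Prod.ext_iff, and_comm]) fun p _ => hA p.1 p.2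

theorem blockMean_mem_Icc (c : V → ℕ) {A : V → V → ℝ} (hA : ∀ v w, A v w ∈ Icc (0 : ℝ) 1)
    (a b : ℕ) : blockMean c A a b ∈ Icc (0 : ℝ) 1 :=
  fiberMean_mem_Icc _ (f := Function.uncurry A) (fun p => hA p.1 p.2) _

theorem blockEnergy_nonneg (c : V → ℕ) (A : V → V → ℝ) : 0 ≤ blockEnergy c A :=
  fiberEnergy_nonneg _ _

theorem blockEnergy_le (c : V → ℕ) {A : V → V → ℝ} (hA : ∀ v w, A v w ∈ Icc (0 : ℝ) 1) :
    blockEnergy c A ≤ (Fintype.card V : ℝ) ^ 2 := by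
  rw [sq, ← Nat.cast_mul, ← Fintype.card_prod]
  exact fiberEnergy_le_card _ (f := Function.uncurry A) fun p => hA p.1 p.2

theorem sum_blockMean_mul (c : V → ℕ) (A : V → V → ℝ) (φ : ℕ → ℕ → ℝ) :
    ∑ v, ∑ w, blockMean c A (c v) (c w) * φ (c v) (c w) = ∑ v, ∑ w, A v w * φ (c v) (c w) := by
  rw [← Fintype.sum_prod_type', ← Fintype.sum_prod_type']
  exact sum_fiberMean_mul (Prod.map c c) (Function.uncurry A) (Function.uncurry φ)

theorem cutBounded_of_abs_le {D : V → V → ℝ} {δ : ℝ} (hδ : 0 ≤ δ) (hD : ∀ v w, |D v w| ≤ δ) :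
    CutBounded D (Fintype.card V ^ 2 * δ) := fun S T => by
  calc |∑ v ∈ S, ∑ w ∈ T, D v w| ≤ ∑ v ∈ S, ∑ w ∈ T, |D v w| :=
        (Finset.abs_sum_le_sum_abs _ _).trans <|
          Finset.sum_le_sum fun v _ => Finset.abs_sum_le_sum_abs _ _
    _ ≤ ∑ _v ∈ S, ∑ _w ∈ T, δ := Finset.sum_le_sum fun v _ => Finset.sum_le_sum fun w _ => hD v w
    _ = S.card * (T.card * δ) := by simp
    _ ≤ Fintype.card V * (Fintype.card V * δ) := by
        gcongr <;> exact Finset.card_le_univ _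
    _ = Fintype.card V ^ 2 * δ := by ring

open Classical in
theorem exists_refinement_cutBounded (c : V → ℕ) (A : V → V → ℝ) :
    ∃ c' : V → ℕ, (∀ v, c' v / 4 = c v) ∧
      CutBounded (fun v w => A v w - blockMean c A (c v) (c w))
        (Fintype.card V * √(blockEnergy c' A - blockEnergy c A)) := by
  set D : V → V → ℝ := fun v w => A v w - blockMean c A (c v) (c w)
  obtain ⟨⟨S, T⟩, hST⟩ := Finite.exists_max fun P : Finset V × Finset V =>
    |∑ v ∈ P.1, ∑ w ∈ P.2, D v w|
  -- The two low bits of the digit appended to the code record membership in `S` and in `T`.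
  set c' : V → ℕ := fun v => 4 * c v + ((if v ∈ S then 2 else 0) + if v ∈ T then 1 else 0)
  have hdiv : ∀ v, c' v / 4 = c v := fun v => by grind
  refine ⟨c', hdiv, fun S' T' => (hST (S', T')).trans ?_⟩
  set φ : ℕ × ℕ → ℝ := fun k => if 2 ≤ k.1 % 4 ∧ k.2 % 2 = 1 then 1 else 0
  have hφ : ∀ p : V × V, φ (Prod.map c' c' p) = if p.1 ∈ S ∧ p.2 ∈ T then 1 else 0 := by
    rintro ⟨v, w⟩
    refine if_congr (and_congr ?_ ?_) rfl rfl <;> grind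
  have hsum : ∑ v ∈ S, ∑ w ∈ T, D v w =
      ∑ p, (Function.uncurry A p - fiberMean (Prod.map c c) (Function.uncurry A)
        (Prod.map c c p)) * φ (Prod.map c' c' p) := by
    simp only [hφ, ite_and, mul_ite, mul_one, mul_zero, Fintype.sum_prod_type, Finset.sum_ite_irrel,
      Finset.sum_const_zero, Finset.sum_ite_mem, Finset.univ_inter]
    rfl
  have hinc := sq_sum_sub_fiberMean_mul_le (Prod.map c c) (Prod.map c' c')
    (Prod.map (· / 4) (· / 4)) (fun p => by simp [Prod.map, hdiv]) (Function.uncurry A) (φ := φ)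
    fun k => by simp only [φ]; split_ifs <;> simp
  rw [← hsum, Fintype.card_prod, Nat.cast_mul, ← sq] at hinc
  calc |∑ v ∈ S, ∑ w ∈ T, D v w|
      ≤ √((Fintype.card V : ℝ) ^ 2 * (blockEnergy c' A - blockEnergy c A)) := Real.abs_le_sqrt hinc
    _ = Fintype.card V * √(blockEnergy c' A - blockEnergy c A) := by
        rw [Real.sqrt_mul (sq_nonneg _), Real.sqrt_sq (Nat.cast_nonneg _)]

theorem exists_isRefiningSeq_cutBounded (A : V → V → ℝ) :
    ∃ c : ℕ → V → ℕ, IsRefiningSeq c ∧ ∀ i,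
      CutBounded (fun v w => A v w - blockMean (c i) A (c i v) (c i w))
        (Fintype.card V * √(blockEnergy (c (i + 1)) A - blockEnergy (c i) A)) := by
  choose refine hdiv hcut using fun c : V → ℕ => exists_refinement_cutBounded c A
  let c : ℕ → V → ℕ := fun i => Nat.rec (fun _ => 0) (fun _ d => refine d) i
  exact ⟨c, ⟨fun _ => rfl, fun i => hdiv (c i)⟩, fun i => hcut (c i)⟩

/-- The Frieze–Kannan weak regularity lemma, simultaneously for all accuracies along one sequence of
codes: the energy is at most `|V| ^ 2`, so one of the first `(l + 1) ^ 2` increments is small. -/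
theorem exists_weak_regular_seq {A : V → V → ℝ} (hA : ∀ v w, A v w ∈ Icc (0 : ℝ) 1) :
    ∃ c : ℕ → V → ℕ, IsRefiningSeq c ∧ ∀ l : ℕ, ∃ i < (l + 1) ^ 2,
      CutBounded (fun v w => A v w - blockMean (c i) A (c i v) (c i w))
        (Fintype.card V ^ 2 * (1 / (l + 1))) := by
  obtain ⟨c, hc, hcut⟩ := exists_isRefiningSeq_cutBounded A
  refine ⟨c, hc, fun l => ?_⟩
  set N : ℝ := (Fintype.card V : ℝ)
  have hlt : 0 < ((l : ℝ) + 1) := by positivity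
  obtain ⟨i, hi, hinc⟩ : ∃ i < (l + 1) ^ 2,
      blockEnergy (c (i + 1)) A - blockEnergy (c i) A ≤ N ^ 2 / (l + 1) ^ 2 := by
    by_contra! hbig
    have hsum := Finset.sum_lt_sum_of_nonempty (s := Finset.range ((l + 1) ^ 2))
      ⟨0, by simp⟩ fun i hi => hbig i (Finset.mem_range.1 hi)
    rw [Finset.sum_range_sub fun i => blockEnergy (c i) A, Finset.sum_const, Finset.card_range,
      nsmul_eq_mul] at hsum
    push_cast at hsum
    rw [mul_div_cancel₀ _ (by positivity)] at hsum
    linarith [blockEnergy_nonneg (c 0) A, blockEnergy_le (c ((l + 1) ^ 2)) hA]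
  refine ⟨i, hi, fun S T => (hcut i S T).trans ?_⟩
  calc N * √(blockEnergy (c (i + 1)) A - blockEnergy (c i) A) ≤ N * √(N ^ 2 / (l + 1) ^ 2) := by
        gcongr
    _ = N ^ 2 * (1 / (l + 1)) := by
        rw [Real.sqrt_div (sq_nonneg _), Real.sqrt_sq (Nat.cast_nonneg _), Real.sqrt_sq hlt.le]
        ring

end WeakRegularity

section CrossEntropy

/-- The binary cross-entropy of `p` relative to `a`, in bits: the expected code length of a
Bernoulli variable with mean `a` under a code optimal for mean `p`. -/
def crossEnt (a p : ℝ) : ℝ := -a * Real.logb 2 p - (1 - a) * Real.logb 2 (1 - p)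

theorem crossEnt_eq_mul_add (a p : ℝ) :
    crossEnt a p = a * (Real.logb 2 (1 - p) - Real.logb 2 p) + -Real.logb 2 (1 - p) := by
  rw [crossEnt]; ring

theorem binEnt_eq_binEntropy_div (x : ℝ) : binEnt x = Real.binEntropy x / Real.log 2 := by
  rw [binEnt, Real.binEntropy, Real.logb, Real.logb, Real.log_inv, Real.log_inv]
  ring

theorem binEnt_mem_Icc {x : ℝ} (hx : x ∈ Icc (0 : ℝ) 1) : binEnt x ∈ Icc (0 : ℝ) 1 := by
  have hlog : 0 < Real.log 2 := Real.log_pos one_lt_two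
  rw [binEnt_eq_binEntropy_div]
  exact ⟨div_nonneg (Real.binEntropy_nonneg hx.1 hx.2) hlog.le,
    div_le_one_of_le₀ Real.binEntropy_le_log_two hlog.le⟩

theorem measurable_binEnt : Measurable binEnt := by
  unfold binEnt Real.logb
  fun_prop

theorem crossEnt_nonneg {a p : ℝ} (ha : a ∈ Icc (0 : ℝ) 1) (hp : p ∈ Icc (0 : ℝ) 1) :
    0 ≤ crossEnt a p := by
  have h₁ : Real.logb 2 p ≤ 0 := Real.logb_nonpos one_lt_two hp.1 hp.2
  have h₂ : Real.logb 2 (1 - p) ≤ 0 :=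
    Real.logb_nonpos one_lt_two (sub_nonneg.2 hp.2) (sub_le_self _ hp.1)
  rw [crossEnt]
  nlinarith [mul_nonneg ha.1 (neg_nonneg.2 h₁), mul_nonneg (sub_nonneg.2 ha.2) (neg_nonneg.2 h₂)]

theorem logb_mem_Icc {δ q : ℝ} (hδ : 0 < δ) (hq : q ∈ Icc δ (1 - δ)) :
    Real.logb 2 q ∈ Icc (Real.logb 2 δ) 0 :=
  ⟨Real.logb_le_logb_of_le one_lt_two hδ hq.1,
    Real.logb_nonpos one_lt_two (hδ.le.trans hq.1) (hq.2.trans (sub_le_self _ hδ.le))⟩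

theorem one_sub_mem_Icc {δ q : ℝ} (hq : q ∈ Icc δ (1 - δ)) : 1 - q ∈ Icc δ (1 - δ) :=
  ⟨by linarith [hq.2], by linarith [hq.1]⟩

theorem abs_logb_one_sub_sub_logb_le {δ q : ℝ} (hδ : 0 < δ) (hq : q ∈ Icc δ (1 - δ)) :
    |Real.logb 2 (1 - q) - Real.logb 2 q| ≤ -Real.logb 2 δ := by
  have h₁ := logb_mem_Icc hδ hq
  have h₂ := logb_mem_Icc hδ (one_sub_mem_Icc hq)
  exact abs_le.2 ⟨by linarith [h₁.2, h₂.1], by linarith [h₁.1, h₂.2]⟩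

theorem crossEnt_le_binEnt_add {a p δ : ℝ} (hδ : 0 < δ) (hp : p ∈ Icc δ (1 - δ))
    (hap : |a - p| ≤ δ) : crossEnt a p ≤ binEnt p + δ * -Real.logb 2 δ := by
  have hdiff := abs_logb_one_sub_sub_logb_le hδ hp
  calc crossEnt a p = binEnt p + (a - p) * (Real.logb 2 (1 - p) - Real.logb 2 p) := by
        rw [crossEnt, binEnt]; ring
    _ ≤ binEnt p + |a - p| * |Real.logb 2 (1 - p) - Real.logb 2 p| := by
        rw [← abs_mul]; gcongr; exact le_abs_self _
    _ ≤ binEnt p + δ * -Real.logb 2 δ := by gcongr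

theorem mul_logb_sub_mul_logb_le {x a : ℝ} (hx : 0 ≤ x) (ha : 0 < a) :
    x * Real.logb 2 a - x * Real.logb 2 x ≤ (a - x) / Real.log 2 := by
  rcases hx.eq_or_lt with rfl | hx
  · simpa using div_nonneg ha.le (Real.log_pos one_lt_two).le
  · have hlog := mul_le_mul_of_nonneg_left (Real.log_le_sub_one_of_pos (div_pos ha hx)) hx.le
    rw [Real.log_div ha.ne' hx.ne', mul_sub, mul_sub, mul_div_cancel₀ _ hx.ne', mul_one] at hlog
    rw [Real.logb, Real.logb, ← mul_div_assoc, ← mul_div_assoc, ← sub_div]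
    exact div_le_div_of_nonneg_right hlog (Real.log_pos one_lt_two).le

/-- Gibbs' inequality. -/
theorem binEnt_le_crossEnt {x p : ℝ} (hx : x ∈ Icc (0 : ℝ) 1) (hp : p ∈ Ioo (0 : ℝ) 1) :
    binEnt x ≤ crossEnt x p := by
  have h₁ := mul_logb_sub_mul_logb_le hx.1 hp.1
  have h₂ := mul_logb_sub_mul_logb_le (sub_nonneg.2 hx.2) (sub_pos.2 hp.2)
  have hcancel : (p - x) / Real.log 2 + (1 - p - (1 - x)) / Real.log 2 = 0 := by ring
  rw [binEnt, crossEnt]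
  linarith

theorem crossEnt_shrink_le {η w : ℝ} (hη : η ∈ Ioo (0 : ℝ) 1) (hw : w ∈ Icc (0 : ℝ) 1) :
    crossEnt w ((1 - η) * w + η / 2) ≤ binEnt w - Real.logb 2 (1 - η) := by
  have hη' : 0 < 1 - η := sub_pos.2 hη.2
  have hlog : ∀ x a : ℝ, 0 ≤ x → (1 - η) * x ≤ a →
      -x * Real.logb 2 a ≤ -x * Real.logb 2 x - x * Real.logb 2 (1 - η) := fun x a hx ha => by
    rcases hx.eq_or_lt with rfl | hx
    · simp
    · have hle := Real.logb_le_logb_of_le one_lt_two (mul_pos hη' hx) ha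
      rw [Real.logb_mul hη'.ne' hx.ne'] at hle
      nlinarith
  have h₁ := hlog w _ hw.1 (le_add_of_nonneg_right (half_pos hη.1).le)
  have h₂ := hlog (1 - w) (1 - ((1 - η) * w + η / 2)) (sub_nonneg.2 hw.2) (by linarith [hη.1])
  rw [crossEnt, binEnt]
  linarith

theorem sum_crossEnt_blockMean {V : Type*} [Fintype V] (c : V → ℕ) (A : V → V → ℝ)
    (φ : ℕ → ℕ → ℝ) :
    ∑ v, ∑ w, crossEnt (blockMean c A (c v) (c w)) (φ (c v) (c w)) =
      ∑ v, ∑ w, crossEnt (A v w) (φ (c v) (c w)) := by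
  simp only [crossEnt_eq_mul_add, Finset.sum_add_distrib]
  rw [sum_blockMean_mul c A fun a b => Real.logb 2 (1 - φ a b) - Real.logb 2 (φ a b)]

end CrossEntropy

section BlockModel

/-- The `j`-th of the `l + 1` equally spaced edge probabilities of resolution `1 / (l + 2)`; all of
them stay away from `0` and `1`, so their logarithms are bounded. -/
def palette (l : ℕ) (j : Fin (l + 1)) : ℝ := (j + 1) / (l + 2)

theorem palette_mem_Icc (l : ℕ) (j : Fin (l + 1)) :
    palette l j ∈ Icc (1 / ((l : ℝ) + 2)) (1 - 1 / (l + 2)) := by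
  have hj : (j : ℝ) ≤ l := by exact_mod_cast Nat.lt_succ_iff.1 j.2
  have hl : (0 : ℝ) < l + 2 := by positivity
  rw [palette, one_sub_div hl.ne', mem_Icc, div_le_div_iff_of_pos_right hl,
    div_le_div_iff_of_pos_right hl]
  constructor <;> linarith [(Nat.cast_nonneg j : (0 : ℝ) ≤ (j : ℕ))]

theorem palette_mem_Ioo (l : ℕ) (j : Fin (l + 1)) : palette l j ∈ Ioo (0 : ℝ) 1 := by
  have hl : (0 : ℝ) < 1 / (l + 2) := by positivity
  exact ⟨hl.trans_le (palette_mem_Icc l j).1, by linarith [(palette_mem_Icc l j).2]⟩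

theorem exists_abs_sub_palette_le (l : ℕ) {d : ℝ} (hd : d ∈ Icc (0 : ℝ) 1) :
    ∃ j, |d - palette l j| ≤ 1 / (l + 2) := by
  have hl : (0 : ℝ) < l + 2 := by positivity
  have hd' : 0 ≤ (l + 1) * d := mul_nonneg (by positivity) hd.1
  refine ⟨⟨min l ⌊(l + 1) * d⌋₊, Nat.lt_succ_of_le (min_le_left _ _)⟩, ?_⟩
  rw [palette, sub_div' hl.ne', abs_div, abs_of_pos hl]
  gcongr
  rw [Nat.cast_min, abs_le]
  have hfloor := Nat.floor_le hd'
  have hfloor' := Nat.lt_floor_add_one ((l + 1) * d)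
  rcases min_cases (l : ℝ) ⌊(l + 1) * d⌋₊ with ⟨hmin, _⟩ | ⟨hmin, _⟩ <;> rw [hmin]
  · constructor <;> nlinarith [hd.1, hd.2]
  · constructor <;> nlinarith [hd.1, hd.2]

variable {κ α β : Type*} {l : ℕ}

/-- A stochastic block model on `α` with blocks indexed by `κ`: a code assigning to each point its
block, together with an edge probability in `palette l` for each pair of blocks. It is a product
type so that the number of block models on a finite type can be read off. -/
abbrev BlockModel (κ : Type*) (l : ℕ) (α : Type*) := (α → κ) × (Sym2 κ → Fin (l + 1))

/-- The edge probability of the pair `x`, `y` in a block model. -/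
def BlockModel.weight (b : BlockModel κ l α) (x y : α) : ℝ := palette l (b.2 s(b.1 x, b.1 y))

/-- The pullback of a block model along a map of the underlying points. -/
def BlockModel.comap (f : β → α) (b : BlockModel κ l α) : BlockModel κ l β := (b.1 ∘ f, b.2)

theorem BlockModel.weight_comm (b : BlockModel κ l α) (x y : α) : b.weight x y = b.weight y x := by
  rw [weight, weight, Sym2.eq_swap]

theorem BlockModel.weight_mem_Ioo (b : BlockModel κ l α) (x y : α) :
    b.weight x y ∈ Ioo (0 : ℝ) 1 :=
  palette_mem_Ioo l _

/-- The bound `δ * log₂ (1 / δ)`, with `δ = 1 / (l + 2)`, on the increase in code length caused by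
rounding edge probabilities to `palette l`. -/
def roundingLoss (l : ℕ) : ℝ := 1 / (l + 2) * -Real.logb 2 (1 / (l + 2))

theorem tendsto_roundingLoss : Tendsto roundingLoss atTop (𝓝 0) := by
  have hδ : Tendsto (fun l : ℕ => (1 : ℝ) / (l + 2)) atTop (𝓝 0) := by
    simpa using (tendsto_add_atTop_iff_nat 2).2 (tendsto_one_div_atTop_nhds_zero_nat (𝕜 := ℝ))
  have hlog := (Real.continuous_mul_log.tendsto 0).comp hδ
  rw [zero_mul] at hlog
  have hneg := (hlog.div_const (Real.log 2)).neg
  rw [zero_div, neg_zero] at hneg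
  refine hneg.congr fun l => ?_
  simp only [roundingLoss, Real.logb, Function.comp_apply]
  ring

variable [Fintype α] [Fintype β]

theorem sum_sum_comp_equiv (e : β ≃ α) (f : α → α → ℝ) :
    ∑ v, ∑ w, f (e v) (e w) = ∑ v, ∑ w, f v w := by
  rw [← e.sum_comp]
  exact Finset.sum_congr rfl fun v _ => e.sum_comp (f (e v))

/-- The block model `b` approximates the matrix `A` in cut norm with accuracy `O(1 / l)`, and
encoding `A` with `b` costs little more than the entropy of `b`. -/
structure IsRegularModel (A : α → α → ℝ) (b : BlockModel κ l α) : Prop where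
  cutBounded : CutBounded (fun v w => A v w - b.weight v w)
    ((Fintype.card α : ℝ) ^ 2 * (2 / (l + 1)))
  sum_crossEnt_le : ∑ v, ∑ w, crossEnt (A v w) (b.weight v w) ≤
    ∑ v, ∑ w, binEnt (b.weight v w) + (Fintype.card α : ℝ) ^ 2 * roundingLoss l

theorem IsRegularModel.comap {A : α → α → ℝ} {b : BlockModel κ l α} (h : IsRegularModel A b)
    (e : β ≃ α) : IsRegularModel (fun v w => A (e v) (e w)) (b.comap e) := by
  constructor
  · intro S T
    simpa [Fintype.card_congr e, BlockModel.weight, BlockModel.comap] using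
      h.cutBounded (S.map e.toEmbedding) (T.map e.toEmbedding)
  · have hcost := h.sum_crossEnt_le
    rw [← sum_sum_comp_equiv e, ← sum_sum_comp_equiv e fun v w => binEnt (b.weight v w),
      ← Fintype.card_congr e] at hcost
    exact hcost

theorem exists_isRegularModel {K : ℕ} [NeZero K] (l : ℕ) {A : α → α → ℝ}
    (hA : ∀ v w, A v w ∈ Icc (0 : ℝ) 1) (hsymm : ∀ v w, A v w = A w v) {c : α → ℕ}
    (hc : ∀ v, c v < K)
    (hcut : CutBounded (fun v w => A v w - blockMean c A (c v) (c w))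
      ((Fintype.card α : ℝ) ^ 2 * (1 / (l + 1)))) :
    ∃ b : BlockModel (Fin K) l α, (∀ v, (b.1 v : ℕ) = c v) ∧ IsRegularModel A b := by
  choose round hround using fun d : Icc (0 : ℝ) 1 => exists_abs_sub_palette_le l d.2
  let mean : ℕ → ℕ → Icc (0 : ℝ) 1 := fun i j => ⟨blockMean c A i j, blockMean_mem_Icc c hA i j⟩
  let q : Sym2 (Fin K) → Fin (l + 1) := Sym2.lift ⟨fun i j => round (mean i j),
    fun i j => congrArg round (Subtype.ext (blockMean_comm c hsymm i j))⟩
  let b : BlockModel (Fin K) l α := (fun v => Fin.ofNat K (c v), q)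
  have hb : ∀ v, (b.1 v : ℕ) = c v := fun v => Nat.mod_eq_of_lt (hc v)
  have hweight : ∀ v w, |blockMean c A (c v) (c w) - b.weight v w| ≤ 1 / (l + 2) := fun v w => by
    rw [← hb v, ← hb w]
    exact hround (mean (b.1 v) (b.1 w))
  refine ⟨b, hb, fun S T => ?_, ?_⟩
  · have hadd := (hcut.add (cutBounded_of_abs_le (by positivity) hweight)) S T
    simp only [sub_add_sub_cancel] at hadd
    refine hadd.trans ?_
    rw [← mul_add, show (2 : ℝ) / (l + 1) = 1 / (l + 1) + 1 / (l + 1) by ring]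
    gcongr
    norm_num
  · calc ∑ v, ∑ w, crossEnt (A v w) (b.weight v w)
        = ∑ v, ∑ w, crossEnt (blockMean c A (c v) (c w)) (b.weight v w) :=
          (sum_crossEnt_blockMean c A fun i j => palette l (q s(Fin.ofNat K i, Fin.ofNat K j))).symm
      _ ≤ ∑ v, ∑ w, (binEnt (b.weight v w) + roundingLoss l) :=
          Finset.sum_le_sum fun v _ => Finset.sum_le_sum fun w _ =>
            crossEnt_le_binEnt_add (by positivity) (palette_mem_Icc l _) (hweight v w)
      _ = ∑ v, ∑ w, binEnt (b.weight v w) + (Fintype.card α : ℝ) ^ 2 * roundingLoss l := by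
          simp only [Finset.sum_add_distrib, Finset.sum_const, Finset.card_univ, nsmul_eq_mul]
          ring

end BlockModel

section SortedModels

/-- The number of blocks sufficient for weak regularity with accuracy `1 / (l + 1)`. -/
def blockCount (l : ℕ) : ℕ := 4 ^ (l + 1) ^ 2

instance (l : ℕ) : NeZero (blockCount l) := ⟨by simp [blockCount]⟩

/-- Sorting the vertices by the finest code makes all coarser codes monotone at once. -/
theorem IsRefiningSeq.exists_perm_monotone {n : ℕ} {c : ℕ → Fin n → ℕ} (hc : IsRefiningSeq c)
    (M : ℕ) : ∃ π : Equiv.Perm (Fin n), ∀ i ≤ M, Monotone (c i ∘ π) := by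
  refine ⟨Tuple.sort (c M), fun i hi v w hvw => ?_⟩
  obtain ⟨j, rfl⟩ := Nat.exists_eq_add_of_le hi
  simp only [Function.comp_apply, ← hc.div_pow i j]
  exact Nat.div_le_div_right (Tuple.monotone_sort (c (i + j)) hvw)

theorem exists_perm_isRegularModel {n : ℕ} {A : Fin n → Fin n → ℝ}
    (hA : ∀ v w, A v w ∈ Icc (0 : ℝ) 1) (hsymm : ∀ v w, A v w = A w v) (m : ℕ) :
    ∃ π : Equiv.Perm (Fin n), ∀ l ≤ m, ∃ b : BlockModel (Fin (blockCount l)) l (Fin n),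
      Monotone b.1 ∧ IsRegularModel (fun v w => A (π v) (π w)) b := by
  obtain ⟨c, hc, hreg⟩ := exists_weak_regular_seq hA
  obtain ⟨π, hπ⟩ := hc.exists_perm_monotone ((m + 1) ^ 2)
  refine ⟨π, fun l hl => ?_⟩
  obtain ⟨i, hi, hcut⟩ := hreg l
  have hlt : ∀ v, c i v < blockCount l := fun v =>
    (hc.lt_pow i v).trans_le (Nat.pow_le_pow_right (by norm_num) hi.le)
  obtain ⟨b, hb, hbA⟩ := exists_isRegularModel l hA hsymm hlt hcut
  have him : i ≤ (m + 1) ^ 2 := hi.le.trans (Nat.pow_le_pow_left (by lia) 2)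
  refine ⟨b.comap π, fun v w hvw => Fin.le_def.2 ?_, hbA.comap π⟩
  simpa only [BlockModel.comap, Function.comp_apply, hb] using hπ i him hvw

end SortedModels

section Counting

theorem two_rpow_neg_crossEnt_ite {p : ℝ} (hp : p ∈ Ioo (0 : ℝ) 1) (P : Prop) [Decidable P] :
    (2 : ℝ) ^ (-crossEnt (if P then 1 else 0) p) = if P then p else 1 - p := by
  split_ifs
  · rw [crossEnt, show -(-1 * Real.logb 2 p - (1 - 1) * Real.logb 2 (1 - p)) = Real.logb 2 p
      by ring, Real.rpow_logb two_pos (by norm_num) hp.1]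
  · rw [crossEnt, show -(-0 * Real.logb 2 p - (1 - 0) * Real.logb 2 (1 - p)) = Real.logb 2 (1 - p)
      by ring, Real.rpow_logb two_pos (by norm_num) (sub_pos.2 hp.2)]

theorem sum_two_rpow_neg_sum_crossEnt {ι : Type*} [DecidableEq ι] (E : Finset ι) {p : ι → ℝ}
    (hp : ∀ e, p e ∈ Ioo (0 : ℝ) 1) :
    ∑ s ∈ E.powerset, (2 : ℝ) ^ (-∑ e ∈ E, crossEnt (if e ∈ s then 1 else 0) (p e)) = 1 := by
  calc ∑ s ∈ E.powerset, (2 : ℝ) ^ (-∑ e ∈ E, crossEnt (if e ∈ s then 1 else 0) (p e))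
      = ∑ s ∈ E.powerset, (∏ e ∈ s, p e) * ∏ e ∈ E \ s, (1 - p e) := by
        refine Finset.sum_congr rfl fun s hs => ?_
        rw [← Finset.sum_neg_distrib, Real.rpow_sum_of_pos two_pos]
        simp only [two_rpow_neg_crossEnt_ite (hp _), Finset.prod_ite,
          Finset.filter_notMem_eq_sdiff, Finset.filter_mem_eq_inter,
          Finset.inter_eq_right.2 (Finset.mem_powerset.1 hs)]
    _ = ∏ e ∈ E, (p e + (1 - p e)) := (Finset.prod_add _ _ _).symm
    _ = 1 := by simp

/-- Kraft's inequality: at most `2 ^ B` subsets of `E` have code length at most `B`. -/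
theorem card_le_two_rpow_of_sum_crossEnt_le {ι : Type*} [DecidableEq ι] (E : Finset ι) {p : ι → ℝ}
    (hp : ∀ e, p e ∈ Ioo (0 : ℝ) 1) {𝒮 : Finset (Finset ι)} (h𝒮 : 𝒮 ⊆ E.powerset) {B : ℝ}
    (hB : ∀ s ∈ 𝒮, ∑ e ∈ E, crossEnt (if e ∈ s then 1 else 0) (p e) ≤ B) :
    (𝒮.card : ℝ) ≤ 2 ^ B := by
  have hkraft : 𝒮.card * (2 : ℝ) ^ (-B) ≤ 1 := calc
    𝒮.card * (2 : ℝ) ^ (-B) = ∑ _s ∈ 𝒮, (2 : ℝ) ^ (-B) := by rw [Finset.sum_const, nsmul_eq_mul]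
    _ ≤ ∑ s ∈ 𝒮, (2 : ℝ) ^ (-∑ e ∈ E, crossEnt (if e ∈ s then 1 else 0) (p e)) :=
        Finset.sum_le_sum fun s hs =>
          Real.rpow_le_rpow_of_exponent_le one_le_two (neg_le_neg (hB s hs))
    _ ≤ ∑ s ∈ E.powerset, (2 : ℝ) ^ (-∑ e ∈ E, crossEnt (if e ∈ s then 1 else 0) (p e)) :=
        Finset.sum_le_sum_of_subset_of_nonneg h𝒮 fun s _ _ => (Real.rpow_pos_of_pos two_pos _).le
    _ = 1 := sum_two_rpow_neg_sum_crossEnt E hp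
  rwa [Real.rpow_neg two_pos.le, ← div_eq_mul_inv, div_le_one (Real.rpow_pos_of_pos two_pos _)]
    at hkraft

open Classical in
/-- The adjacency matrix of `G` with real entries, for classical decidability of adjacency. -/
def adjIndicator {V : Type*} (G : SimpleGraph V) (v w : V) : ℝ := if G.Adj v w then 1 else 0

theorem adjIndicator_mem_Icc {V : Type*} (G : SimpleGraph V) (v w : V) :
    adjIndicator G v w ∈ Icc (0 : ℝ) 1 := by
  rw [adjIndicator]
  split_ifs <;> simp

theorem adjIndicator_comm {V : Type*} (G : SimpleGraph V) (v w : V) :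
    adjIndicator G v w = adjIndicator G w v := by
  classical
  exact if_congr (G.adj_comm v w) rfl rfl

theorem two_mul_sum_lt_le_sum {V : Type*} [Fintype V] [LinearOrder V] {f : V → V → ℝ}
    (hf : ∀ v w, 0 ≤ f v w) (hsymm : ∀ v w, f v w = f w v) :
    2 * ∑ e : V × V with e.1 < e.2, f e.1 e.2 ≤ ∑ v, ∑ w, f v w := by
  have hswap : ∑ e : V × V with e.2 < e.1, f e.1 e.2 = ∑ e : V × V with e.1 < e.2, f e.1 e.2 :=
    Finset.sum_equiv (Equiv.prodComm V V) (by simp) fun e _ => hsymm e.1 e.2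
  rw [two_mul, ← Fintype.sum_prod_type']
  nth_rw 2 [← hswap]
  rw [Finset.sum_filter, Finset.sum_filter, ← Finset.sum_add_distrib]
  refine Finset.sum_le_sum fun e _ => ?_
  rcases lt_trichotomy e.1 e.2 with h | h | h <;> simp [h, h.not_gt, hf]

theorem ncard_le_two_rpow_half {V : Type*} [Fintype V] [LinearOrder V] {p : V → V → ℝ}
    (hp : ∀ v w, p v w ∈ Ioo (0 : ℝ) 1) (hsymm : ∀ v w, p v w = p w v) {𝒢 : Set (SimpleGraph V)}
    {B : ℝ} (hB : ∀ G ∈ 𝒢, ∑ v, ∑ w, crossEnt (adjIndicator G v w) (p v w) ≤ B) :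
    (𝒢.ncard : ℝ) ≤ 2 ^ (B / 2) := by
  classical
  set E : Finset (V × V) := {e | e.1 < e.2} with hE
  let pairs : SimpleGraph V → Finset (V × V) := fun G => {e ∈ E | G.Adj e.1 e.2}
  have hpairs : Function.Injective pairs := fun G H hGH => by
    have hlt : ∀ v w, v < w → (G.Adj v w ↔ H.Adj v w) := fun v w hvw => by
      simpa [pairs, hE, hvw] using Finset.ext_iff.1 hGH (v, w)
    ext v w
    rcases lt_trichotomy v w with hvw | rfl | hvw
    · exact hlt v w hvw
    · simp
    · rw [G.adj_comm, H.adj_comm, hlt w v hvw]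
  rw [Set.ncard_eq_toFinset_card', ← Finset.card_image_of_injective _ hpairs]
  refine card_le_two_rpow_of_sum_crossEnt_le E (fun e => hp e.1 e.2)
    (Finset.image_subset_iff.2 fun G _ => Finset.mem_powerset.2 (Finset.filter_subset _ _))
    (Finset.forall_mem_image.2 fun G hG => ?_)
  have hsum : ∑ e ∈ E, crossEnt (if e ∈ pairs G then 1 else 0) (p e.1 e.2) =
      ∑ e ∈ E, crossEnt (adjIndicator G e.1 e.2) (p e.1 e.2) :=
    Finset.sum_congr rfl fun e he => by simp [pairs, he, adjIndicator]
  have hdouble := two_mul_sum_lt_le_sum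
    (f := fun v w => crossEnt (adjIndicator G v w) (p v w))
    (fun v w => crossEnt_nonneg (adjIndicator_mem_Icc G v w) (Ioo_subset_Icc_self (hp v w)))
    (fun v w => by rw [adjIndicator_comm, hsymm])
  rw [hsum]
  linarith [hB G (Set.mem_toFinset.1 hG)]

theorem ncard_le_of_exists_blockModel {V : Type*} [Fintype V] [LinearOrder V] {κ : Type*}
    [Finite κ] {l : ℕ} {𝒢 : Set (SimpleGraph V)} {B : ℝ}
    (h : ∀ G ∈ 𝒢, ∃ b : BlockModel κ l V,
      ∑ v, ∑ w, crossEnt (adjIndicator G v w) (b.weight v w) ≤ B) :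
    (𝒢.ncard : ℝ) ≤ Nat.card (BlockModel κ l V) * 2 ^ (B / 2) := by
  classical
  have := Fintype.ofFinite κ
  let cheap : BlockModel κ l V → Set (SimpleGraph V) := fun b =>
    {G | ∑ v, ∑ w, crossEnt (adjIndicator G v w) (b.weight v w) ≤ B}
  have hcover : 𝒢 ⊆ ⋃ b, cheap b := fun G hG => mem_iUnion.2 (h G hG)
  calc (𝒢.ncard : ℝ) ≤ ∑ b, ((cheap b).ncard : ℝ) := by
        exact_mod_cast (Set.ncard_le_ncard hcover).trans (Set.ncard_iUnion_le_of_fintype cheap)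
    _ ≤ ∑ _b : BlockModel κ l V, (2 : ℝ) ^ (B / 2) := Finset.sum_le_sum fun b _ =>
        ncard_le_two_rpow_half b.weight_mem_Ioo b.weight_comm fun G hG => hG
    _ = Nat.card (BlockModel κ l V) * 2 ^ (B / 2) := by
        rw [Finset.sum_const, Finset.card_univ, nsmul_eq_mul, Nat.card_eq_fintype_card]

theorem eventually_card_blockModel_mul_le {κ : Type*} [Finite κ] [Nonempty κ] (l : ℕ) (t : ℝ)
    {ε : ℝ} (hε : 0 < ε) :
    ∀ᶠ n : ℕ in atTop, (Nat.card (BlockModel κ l (Fin n)) : ℝ) * 2 ^ ((n : ℝ) ^ 2 * t / 2) ≤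
      2 ^ ((t + ε) * choose2 n) := by
  set k : ℝ := (Nat.card κ : ℝ)
  set C : ℝ := (Nat.card (Sym2 κ → Fin (l + 1)) : ℝ)
  have hk : 0 < k := Nat.cast_pos.2 Nat.card_pos
  have hC : 0 < C := Nat.cast_pos.2 Nat.card_pos
  set a := Real.logb 2 k + (t + ε) / 2
  have hcard : ∀ n : ℕ, (Nat.card (BlockModel κ l (Fin n)) : ℝ) =
      2 ^ (n * Real.logb 2 k + Real.logb 2 C) := fun n => by
    rw [Real.rpow_add two_pos, Real.rpow_logb two_pos (by norm_num) hC, mul_comm (n : ℝ),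
      Real.rpow_mul two_pos.le, Real.rpow_logb two_pos (by norm_num) hk, Real.rpow_natCast]
    simp [k, C, Nat.card_prod, Nat.card_fun]
  have hlarge := tendsto_natCast_atTop_atTop.eventually_ge_atTop (2 * (a + |Real.logb 2 C|) / ε)
  filter_upwards [hlarge, eventually_ge_atTop 1] with n hn hn1
  have hn1' : (1 : ℝ) ≤ n := by exact_mod_cast hn1
  have hexp : n * (a + |Real.logb 2 C|) ≤ n * (ε / 2 * n) := by
    gcongr
    rw [div_le_iff₀ hε] at hn
    linarith
  have habs : Real.logb 2 C ≤ n * |Real.logb 2 C| :=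
    (le_abs_self _).trans (le_mul_of_one_le_left (abs_nonneg _) hn1')
  rw [hcard, ← Real.rpow_add two_pos]
  refine Real.rpow_le_rpow_of_exponent_le one_le_two ?_
  simp only [a] at hexp
  rw [choose2]
  linarith

end Counting

section UnitSquare

/-- Lebesgue measure on the unit interval. -/
abbrev unitVolume : Measure ℝ := volume.restrict (Icc (0 : ℝ) 1)

/-- Lebesgue measure on the unit square. -/
abbrev squareVolume : Measure (ℝ × ℝ) := unitVolume.prod unitVolume

instance : IsProbabilityMeasure unitVolume := ⟨by simp⟩

theorem ae_mem_Ioc_zero_one : ∀ᵐ x ∂unitVolume, x ∈ Ioc (0 : ℝ) 1 := by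
  rw [unitVolume, ← restrict_Ioc_eq_restrict_Icc]
  exact ae_restrict_mem measurableSet_Ioc

theorem restrict_prod_eq_restrict_squareVolume {S T : Set ℝ} (hS : S ⊆ Icc 0 1)
    (hT : T ⊆ Icc 0 1) :
    (volume : Measure (ℝ × ℝ)).restrict (S ×ˢ T) = squareVolume.restrict (S ×ˢ T) := by
  rw [squareVolume, unitVolume, Measure.prod_restrict, ← Measure.volume_eq_prod,
    Measure.restrict_restrict_of_subset (prod_mono hS hT)]

variable {n : ℕ} [NeZero n]

/-- The index of the cell `(v / n, (v + 1) / n]` containing a point of `(0, 1]`, extended to a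
monotone function on the whole line. -/
def gridIndex (n : ℕ) [NeZero n] (x : ℝ) : Fin n :=
  ⟨min (⌈n * x⌉₊ - 1) (n - 1), (min_le_right _ _).trans_lt (Nat.sub_one_lt (NeZero.ne n))⟩

theorem monotone_gridIndex : Monotone (gridIndex n) := fun x y hxy => by
  rw [gridIndex, gridIndex, Fin.mk_le_mk]
  gcongr

theorem measurable_gridIndex : Measurable (gridIndex n) :=
  monotone_gridIndex.measurable

theorem gridIndex_eq_iff {x : ℝ} (hx : x ∈ Ioc (0 : ℝ) 1) (v : Fin n) :
    gridIndex n x = v ↔ ⌈n * x⌉ = (v : ℤ) + 1 := by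
  have hn : (0 : ℝ) < n := Nat.cast_pos.2 (NeZero.pos n)
  have hpos : 0 < ⌈n * x⌉₊ := Nat.ceil_pos.2 (mul_pos hn hx.1)
  have hle : ⌈n * x⌉₊ ≤ n := Nat.ceil_le.2 (mul_le_of_le_one_right hn.le hx.2)
  rw [Fin.ext_iff, gridIndex, ← Int.natCast_ceil_eq_ceil (mul_pos hn hx.1).le]
  dsimp only
  lia

theorem gridIndex_preimage_inter_Ioc (v : Fin n) :
    gridIndex n ⁻¹' {v} ∩ Ioc 0 1 = Ioc ((v : ℝ) / n) ((v + 1) / n) := by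
  have hn : (0 : ℝ) < n := Nat.cast_pos.2 (NeZero.pos n)
  have hv : (v : ℝ) + 1 ≤ n := by exact_mod_cast v.2
  have hcell : ∀ x : ℝ, ⌈n * x⌉ = (v : ℤ) + 1 ↔ x ∈ Ioc ((v : ℝ) / n) ((v + 1) / n) := fun x => by
    rw [Int.ceil_eq_iff, mem_Ioc, div_lt_iff₀ hn, le_div_iff₀ hn, mul_comm x]
    push_cast
    simp
  ext x
  rw [mem_inter_iff, mem_preimage, mem_singleton_iff]
  refine ⟨fun ⟨hxv, hx⟩ => (hcell x).1 ((gridIndex_eq_iff hx v).1 hxv), fun hx => ?_⟩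
  have hx01 : x ∈ Ioc (0 : ℝ) 1 :=
    ⟨(div_nonneg (Nat.cast_nonneg _) hn.le).trans_lt hx.1, hx.2.trans ((div_le_one hn).2 hv)⟩
  exact ⟨(gridIndex_eq_iff hx01 v).2 ((hcell x).2 hx), hx01⟩

theorem unitVolume_real_gridIndex_preimage (v : Fin n) :
    unitVolume.real (gridIndex n ⁻¹' {v}) = 1 / n := by
  rw [unitVolume, ← restrict_Ioc_eq_restrict_Icc,
    measureReal_restrict_apply (measurable_gridIndex (measurableSet_singleton v)),
    gridIndex_preimage_inter_Ioc, Real.volume_real_Ioc_of_le (by gcongr; linarith), ← sub_div,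
    add_sub_cancel_left]

theorem integral_prod_comp {κ : Type*} [Fintype κ] [MeasurableSpace κ]
    [MeasurableSingletonClass κ] {α : Type*} [MeasurableSpace α] (μ ν : Measure α)
    [IsFiniteMeasure μ] [IsFiniteMeasure ν] {f : α → κ} (hf : Measurable f) (D : κ → κ → ℝ) :
    ∫ p, D (f p.1) (f p.2) ∂μ.prod ν =
      ∑ v, ∑ w, μ.real (f ⁻¹' {v}) * ν.real (f ⁻¹' {w}) * D v w := by
  have hpair : Measurable (Prod.map f f) := hf.prodMap hf
  have hmap : ∫ p, D (f p.1) (f p.2) ∂μ.prod ν =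
      ∫ q : κ × κ, D q.1 q.2 ∂(μ.prod ν).map (Prod.map f f) :=
    (integral_map (f := fun q : κ × κ => D q.1 q.2) hpair.aemeasurable
      (measurable_of_countable _).aestronglyMeasurable).symm
  rw [hmap, integral_fintype Integrable.of_finite, Fintype.sum_prod_type]
  refine Finset.sum_congr rfl fun v _ => Finset.sum_congr rfl fun w _ => ?_
  rw [map_measureReal_apply hpair (measurableSet_singleton _), ← singleton_prod_singleton,
    preimage_prod_map_prod, measureReal_prod_prod, smul_eq_mul]

theorem integral_gridIndex (D : Fin n → Fin n → ℝ) :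
    ∫ p, D (gridIndex n p.1) (gridIndex n p.2) ∂squareVolume = (∑ v, ∑ w, D v w) / n ^ 2 := by
  rw [integral_prod_comp _ _ measurable_gridIndex]
  simp only [unitVolume_real_gridIndex_preimage, ← Finset.mul_sum]
  ring

end UnitSquare

section CutDistance

theorem CutBounded.abs_sum_mul_le {V : Type*} [Fintype V] {D : V → V → ℝ} {C : ℝ}
    (hD : CutBounded D C) {f g : V → ℝ} (hf : ∀ v, f v ∈ Icc (0 : ℝ) 1)
    (hg : ∀ v, g v ∈ Icc (0 : ℝ) 1) : |∑ v, ∑ w, f v * g w * D v w| ≤ C := by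
  have hlinear : ∀ {a : V → ℝ}, (∀ S : Finset V, |∑ v ∈ S, a v| ≤ C) →
      ∀ {f : V → ℝ}, (∀ v, f v ∈ Icc (0 : ℝ) 1) → |∑ v, f v * a v| ≤ C := by
    classical
    intro a ha f hf
    refine abs_le.2 ⟨(abs_le.1 (ha {v | a v ≤ 0})).1.trans ?_,
      le_trans ?_ (abs_le.1 (ha {v | 0 ≤ a v})).2⟩
    all_goals
      rw [Finset.sum_filter]
      refine Finset.sum_le_sum fun v _ => ?_
      split_ifs <;> nlinarith [(hf v).1, (hf v).2]
  have hcolumn : ∀ S : Finset V, |∑ v ∈ S, ∑ w, g w * D v w| ≤ C := fun S => by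
    rw [Finset.sum_comm]
    simp only [← Finset.mul_sum]
    exact hlinear (fun T => by rw [Finset.sum_comm]; exact hD S T) hg
  simpa only [Finset.mul_sum, mul_assoc] using hlinear hcolumn hf

theorem IsGraphon.integrable {W : ℝ → ℝ → ℝ} (hW : IsGraphon W) {μ : Measure (ℝ × ℝ)}
    [IsFiniteMeasure μ] : Integrable (fun p => W p.1 p.2) μ :=
  Integrable.of_mem_Icc 0 1 hW.2.1.aemeasurable (Eventually.of_forall fun p => hW.2.2 p.1 p.2)

theorem cutNorm_le {U : ℝ → ℝ → ℝ} {C : ℝ} (h : ∀ S T : Set ℝ, MeasurableSet S → MeasurableSet T →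
      S ⊆ Icc 0 1 → T ⊆ Icc 0 1 → |∫ p in S ×ˢ T, U p.1 p.2 ∂squareVolume| ≤ C) :
    cutNorm U ≤ C := by
  refine csSup_le ⟨_, ∅, ∅, .empty, .empty, empty_subset _, empty_subset _, rfl⟩ ?_
  rintro _ ⟨S, T, hSm, hTm, hS, hT, rfl⟩
  rw [restrict_prod_eq_restrict_squareVolume hS hT]
  exact h S T hSm hTm hS hT

theorem abs_setIntegral_le_cutNorm {U : ℝ → ℝ → ℝ}
    (hU : Integrable (fun p => U p.1 p.2) squareVolume) {S T : Set ℝ} (hSm : MeasurableSet S)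
    (hTm : MeasurableSet T) (hS : S ⊆ Icc 0 1) (hT : T ⊆ Icc 0 1) :
    |∫ p in S ×ˢ T, U p.1 p.2 ∂squareVolume| ≤ cutNorm U := by
  rw [← restrict_prod_eq_restrict_squareVolume hS hT]
  refine le_csSup ⟨∫ p, |U p.1 p.2| ∂squareVolume, ?_⟩ ⟨S, T, hSm, hTm, hS, hT, rfl⟩
  rintro _ ⟨S', T', -, -, hS', hT', rfl⟩
  rw [restrict_prod_eq_restrict_squareVolume hS' hT']
  exact abs_integral_le_integral_abs.trans
    (setIntegral_le_integral hU.abs (Eventually.of_forall fun _ => abs_nonneg _))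

theorem cutNorm_le_integral_abs {U : ℝ → ℝ → ℝ}
    (hU : Integrable (fun p => U p.1 p.2) squareVolume) :
    cutNorm U ≤ ∫ p, |U p.1 p.2| ∂squareVolume :=
  cutNorm_le fun _ _ _ _ _ _ => abs_integral_le_integral_abs.trans
    (setIntegral_le_integral hU.abs (Eventually.of_forall fun _ => abs_nonneg _))

theorem cutNorm_nonneg (U : ℝ → ℝ → ℝ) : 0 ≤ cutNorm U :=
  Real.sSup_nonneg (by rintro _ ⟨S, T, -, -, -, -, rfl⟩; exact abs_nonneg _)

theorem dCut_comm (U V : ℝ → ℝ → ℝ) : dCut U V = dCut V U := by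
  have hswap : ∀ S T : Set ℝ, |∫ p in S ×ˢ T, U p.1 p.2 - V p.1 p.2| =
      |∫ p in S ×ˢ T, V p.1 p.2 - U p.1 p.2| := fun S T => by
    rw [← abs_neg, ← integral_neg]
    simp only [neg_sub]
  simp only [dCut, cutNorm, hswap]

theorem dCut_triangle {U V W : ℝ → ℝ → ℝ} (hU : IsGraphon U) (hV : IsGraphon V)
    (hW : IsGraphon W) : dCut U W ≤ dCut U V + dCut V W := by
  refine cutNorm_le fun S T hSm hTm hS hT => ?_
  have hUV := abs_setIntegral_le_cutNorm (U := fun x y => U x y - V x y)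
    (hU.integrable.sub hV.integrable) hSm hTm hS hT
  have hVW := abs_setIntegral_le_cutNorm (U := fun x y => V x y - W x y)
    (hV.integrable.sub hW.integrable) hSm hTm hS hT
  rw [integral_sub hU.integrable hV.integrable] at hUV
  rw [integral_sub hV.integrable hW.integrable] at hVW
  rw [integral_sub hU.integrable hW.integrable]
  exact (abs_sub_le _ _ _).trans (add_le_add hUV hVW)

theorem deltaCut_nonneg (U V : ℝ → ℝ → ℝ) : 0 ≤ deltaCut U V :=
  Real.sInf_nonneg (by rintro _ ⟨σ, τ, -, -, rfl⟩; exact cutNorm_nonneg _)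

theorem deltaCut_le_dCut (U V : ℝ → ℝ → ℝ) : deltaCut U V ≤ dCut U V := by
  have hid : IsMPSelf id := ⟨MeasurePreserving.id _, mapsTo_id _⟩
  refine csInf_le ⟨0, ?_⟩ ⟨id, id, hid, hid, rfl⟩
  rintro _ ⟨σ, τ, -, -, rfl⟩
  exact cutNorm_nonneg _

theorem measurable_comp₂_of_countable {α β κ κ' : Type*} [MeasurableSpace α] [MeasurableSpace β]
    [MeasurableSpace κ] [MeasurableSpace κ'] [Countable κ] [Countable κ']
    [MeasurableSingletonClass κ] [MeasurableSingletonClass κ'] (c : κ → κ' → β) {f : α → κ}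
    {g : α → κ'} (hf : Measurable f) (hg : Measurable g) : Measurable fun x => c (f x) (g x) :=
  (measurable_of_countable fun q : κ × κ' => c q.1 q.2).comp (hf.prodMk hg)

theorem isGraphon_graphonOfGraph {n : ℕ} (G : SimpleGraph (Fin n)) :
    IsGraphon (graphonOfGraph G) := by
  classical
  refine ⟨fun x y => if_congr ⟨?_, ?_⟩ rfl rfl, ?_, fun x y => ?_⟩
  · exact fun ⟨i, j, hij, hi, hj⟩ => ⟨j, i, hij.symm, hj, hi⟩
  · exact fun ⟨i, j, hij, hi, hj⟩ => ⟨j, i, hij.symm, hj, hi⟩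
  · have hceil : ∀ {f : ℝ × ℝ → ℝ}, Measurable f → Measurable fun p => ⌈n * f p⌉ :=
      fun hf => (hf.const_mul _).ceil
    exact measurable_comp₂_of_countable (fun r s : ℤ =>
      if ∃ i j : Fin n, G.Adj i j ∧ r = (i : ℤ) + 1 ∧ s = (j : ℤ) + 1 then (1 : ℝ) else 0)
      (hceil measurable_fst) (hceil measurable_snd)
  · rw [graphonOfGraph]
    split_ifs <;> simp

variable {n : ℕ} [NeZero n]

theorem graphonOfGraph_eq_adjIndicator (G : SimpleGraph (Fin n)) {x y : ℝ}
    (hx : x ∈ Ioc (0 : ℝ) 1) (hy : y ∈ Ioc (0 : ℝ) 1) :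
    graphonOfGraph G x y = adjIndicator G (gridIndex n x) (gridIndex n y) := by
  classical
  refine if_congr ?_ rfl rfl
  simp only [← gridIndex_eq_iff hx, ← gridIndex_eq_iff hy]
  refine ⟨?_, fun h => ⟨_, _, h, rfl, rfl⟩⟩
  rintro ⟨i, j, h, rfl, rfl⟩
  exact h

theorem abs_setIntegral_gridIndex_le {D : Fin n → Fin n → ℝ} {C : ℝ}
    (hD : CutBounded D ((n : ℝ) ^ 2 * C)) (S T : Set ℝ) :
    |∫ p in S ×ˢ T, D (gridIndex n p.1) (gridIndex n p.2) ∂squareVolume| ≤ C := by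
  have hn : (0 : ℝ) < n := Nat.cast_pos.2 (NeZero.pos n)
  have hmass : ∀ (S : Set ℝ) (v : Fin n),
      n * (unitVolume.restrict S).real (gridIndex n ⁻¹' {v}) ∈ Icc (0 : ℝ) 1 := fun S v => by
    refine ⟨by positivity, ?_⟩
    have hle : (unitVolume.restrict S).real (gridIndex n ⁻¹' {v}) ≤ 1 / n :=
      unitVolume_real_gridIndex_preimage v ▸
        ENNReal.toReal_mono (measure_ne_top _ _) (Measure.restrict_apply_le _ _)
    exact (mul_le_mul_of_nonneg_left hle hn.le).trans_eq (mul_one_div_cancel hn.ne')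
  have hscale : ∀ a b : Fin n → ℝ, ∑ v, ∑ w, n * a v * (n * b w) * D v w =
      (n : ℝ) ^ 2 * ∑ v, ∑ w, a v * b w * D v w := fun a b => by
    simp only [Finset.mul_sum]
    exact Finset.sum_congr rfl fun v _ => Finset.sum_congr rfl fun w _ => by ring
  have hsum := hD.abs_sum_mul_le (hmass S) (hmass T)
  rw [hscale, abs_mul, abs_of_pos (by positivity)] at hsum
  rw [← Measure.prod_restrict, integral_prod_comp _ _ measurable_gridIndex]
  exact le_of_mul_le_mul_left hsum (by positivity)

theorem dCut_graphonOfGraph_le (G : SimpleGraph (Fin n)) {P : Fin n → Fin n → ℝ} {C : ℝ}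
    (h : CutBounded (fun v w => adjIndicator G v w - P v w) ((n : ℝ) ^ 2 * C)) :
    dCut (graphonOfGraph G) (fun x y => P (gridIndex n x) (gridIndex n y)) ≤ C := by
  refine cutNorm_le fun S T _ _ _ _ => ?_
  have hae : ∀ᵐ p ∂squareVolume, graphonOfGraph G p.1 p.2 - P (gridIndex n p.1) (gridIndex n p.2) =
      adjIndicator G (gridIndex n p.1) (gridIndex n p.2) -
        P (gridIndex n p.1) (gridIndex n p.2) := by
    filter_upwards [Measure.quasiMeasurePreserving_fst.ae ae_mem_Ioc_zero_one,
      Measure.quasiMeasurePreserving_snd.ae ae_mem_Ioc_zero_one] with p hp₁ hp₂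
    rw [graphonOfGraph_eq_adjIndicator G hp₁ hp₂]
  rw [integral_congr_ae (ae_restrict_of_ae hae)]
  exact abs_setIntegral_gridIndex_le h S T

end CutDistance

section WeakLimit

theorem exists_forall_tendsto_inner {E : Type*} [NormedAddCommGroup E] [InnerProductSpace ℝ E]
    [CompleteSpace E] {ι : Type*} (𝒰 : Ultrafilter ι) {u : ι → E} {r : ℝ} (hu : ∀ i, ‖u i‖ ≤ r) :
    ∃ v, ∀ w, Tendsto (fun i => inner ℝ (u i) w) 𝒰 (𝓝 (inner ℝ v w)) := by
  let T : ι → WeakDual ℝ E := fun i => StrongDual.toWeakDual (InnerProductSpace.toDual ℝ E (u i))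
  have hT : ∀ i, T i ∈ WeakDual.toStrongDual ⁻¹' Metric.closedBall 0 r := fun i => by
    simpa [T, mem_closedBall_zero_iff] using hu i
  have hcompact := WeakDual.isCompact_closedBall (𝕜 := ℝ) (E := E) 0 r
  obtain ⟨ψ, -, hψ⟩ := hcompact.ultrafilter_le_nhds (𝒰.map T)
    (le_principal_iff.2 (Ultrafilter.mem_map.2 (univ_mem' hT)))
  refine ⟨(InnerProductSpace.toDual ℝ E).symm (WeakDual.toStrongDual ψ), fun w => ?_⟩
  rw [InnerProductSpace.toDual_symm_apply]
  exact ((WeakDual.eval_continuous w).tendsto ψ).comp hψ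

variable {ι α : Type*} [MeasurableSpace α] {μ : Measure α} {F : Filter ι} {f : ι → α → ℝ}
  {g : α → ℝ}

/-- Weak convergence in `L²(μ)`, stated for functions rather than their classes. -/
def WeakTendsto (μ : Measure α) (f : ι → α → ℝ) (F : Filter ι) (g : α → ℝ) : Prop :=
  ∀ φ, MemLp φ 2 μ → Tendsto (fun i => ∫ x, f i x * φ x ∂μ) F (𝓝 (∫ x, g x * φ x ∂μ))

theorem WeakTendsto.congr_ae (h : WeakTendsto μ f F g) {g' : α → ℝ} (hg : g =ᵐ[μ] g') :
    WeakTendsto μ f F g' := fun φ hφ => by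
  have hint : ∫ x, g x * φ x ∂μ = ∫ x, g' x * φ x ∂μ :=
    integral_congr_ae (hg.mul (ae_eq_refl φ))
  exact hint ▸ h φ hφ

variable [IsFiniteMeasure μ]

theorem WeakTendsto.setIntegral (h : WeakTendsto μ f F g) {s : Set α} (hs : MeasurableSet s) :
    Tendsto (fun i => ∫ x in s, f i x ∂μ) F (𝓝 (∫ x in s, g x ∂μ)) := by
  have hind := h (s.indicator fun _ => 1) ((memLp_const 1).indicator hs)
  simpa only [← indicator_mul_right, mul_one, integral_indicator hs] using hind

theorem WeakTendsto.ae_mem_Icc [F.NeBot] (h : WeakTendsto μ f F g) (hg : Integrable g μ)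
    (hfm : ∀ i, Measurable (f i)) (hf : ∀ i x, f i x ∈ Icc (0 : ℝ) 1) :
    ∀ᵐ x ∂μ, g x ∈ Icc (0 : ℝ) 1 := by
  have hfi : ∀ i, Integrable (f i) μ := fun i =>
    Integrable.of_mem_Icc 0 1 (hfm i).aemeasurable (Eventually.of_forall (hf i))
  have hnonneg : 0 ≤ᵐ[μ] g := ae_nonneg_of_forall_setIntegral_nonneg hg fun s hs _ =>
    ge_of_tendsto' (h.setIntegral hs) fun i => integral_nonneg fun x => (hf i x).1
  have hle_one : g ≤ᵐ[μ] 1 := ae_le_of_forall_setIntegral_le hg (integrable_const 1) fun s hs _ =>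
    le_of_tendsto' (h.setIntegral hs) fun i =>
      integral_mono (hfi i).integrableOn (integrable_const 1) fun x => (hf i x).2
  exact hnonneg.and hle_one

theorem exists_weakTendsto (𝒰 : Ultrafilter ι) (hfm : ∀ i, Measurable (f i))
    (hf : ∀ i x, f i x ∈ Icc (0 : ℝ) 1) :
    ∃ g, Measurable g ∧ (∀ x, g x ∈ Icc (0 : ℝ) 1) ∧ WeakTendsto μ f 𝒰 g := by
  have hbound : ∀ i, ∀ᵐ x ∂μ, ‖f i x‖ ≤ 1 := fun i => Eventually.of_forall fun x => by
    rw [Real.norm_of_nonneg (hf i x).1]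
    exact (hf i x).2
  have hLp : ∀ i, MemLp (f i) 2 μ := fun i =>
    MemLp.of_bound (hfm i).aestronglyMeasurable 1 (hbound i)
  obtain ⟨v, hv⟩ := exists_forall_tendsto_inner 𝒰 (u := fun i => (hLp i).toLp (f i)) fun i =>
    Lp.norm_le_of_ae_bound (C := 1) zero_le_one <| by
      filter_upwards [(hLp i).coeFn_toLp, hbound i] with x hx hle
      rwa [hx]
  have hinner : ∀ {φ} (hφ : MemLp φ 2 μ) (w : Lp ℝ 2 μ) {k : α → ℝ}, w =ᵐ[μ] k →
      inner ℝ w (hφ.toLp φ) = ∫ x, k x * φ x ∂μ := fun hφ w k hwk => by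
    rw [L2.inner_def]
    refine integral_congr_ae ?_
    filter_upwards [hφ.coeFn_toLp, hwk] with x hφx hwx
    rw [hφx, hwx, Real.inner_apply]
  have hweak : WeakTendsto μ f 𝒰 v := fun φ hφ => by
    simpa only [hinner hφ _ (hLp _).coeFn_toLp, hinner hφ v (ae_eq_refl v)] using hv (hφ.toLp φ)
  have hmem := hweak.ae_mem_Icc ((Lp.memLp v).integrable one_le_two) hfm hf
  refine ⟨fun x => max 0 (min 1 (v x)), by fun_prop, fun x => ?_, hweak.congr_ae ?_⟩
  · exact ⟨le_max_left _ _, max_le zero_le_one (min_le_left _ _)⟩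
  · filter_upwards [hmem] with x hx
    rw [min_eq_right hx.2, max_eq_right hx.1]

end WeakLimit

section EntropySemicontinuity

theorem integrable_binEnt_comp {α : Type*} [MeasurableSpace α] {μ : Measure α} [IsFiniteMeasure μ]
    {g : α → ℝ} (hgm : Measurable g) (hg : ∀ x, g x ∈ Icc (0 : ℝ) 1) :
    Integrable (fun x => binEnt (g x)) μ :=
  Integrable.of_mem_Icc 0 1 (measurable_binEnt.comp hgm).aemeasurable
    (Eventually.of_forall fun x => binEnt_mem_Icc (hg x))

variable {ι α : Type*} [MeasurableSpace α] {μ : Measure α} {F : Filter ι} {f : ι → α → ℝ}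
  {g p : α → ℝ}

theorem integral_crossEnt [IsFiniteMeasure μ] {δ : ℝ} (hgm : Measurable g)
    (hg : ∀ x, g x ∈ Icc (0 : ℝ) 1) (hpm : Measurable p) (hδ : 0 < δ)
    (hp : ∀ x, p x ∈ Icc δ (1 - δ)) :
    Integrable (fun x => crossEnt (g x) (p x)) μ ∧ ∫ x, crossEnt (g x) (p x) ∂μ =
      ∫ x, g x * (Real.logb 2 (1 - p x) - Real.logb 2 (p x)) ∂μ +
        ∫ x, -Real.logb 2 (1 - p x) ∂μ := by
  have hslope : Integrable (fun x => g x * (Real.logb 2 (1 - p x) - Real.logb 2 (p x))) μ := by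
    refine Integrable.of_bound (C := -Real.logb 2 δ) ?_ (Eventually.of_forall fun x => ?_)
    · unfold Real.logb
      fun_prop
    · rw [Real.norm_eq_abs, abs_mul, abs_of_nonneg (hg x).1]
      exact (mul_le_of_le_one_left (abs_nonneg _) (hg x).2).trans
        (abs_logb_one_sub_sub_logb_le hδ (hp x))
  have hconst : Integrable (fun x => -Real.logb 2 (1 - p x)) μ := by
    refine Integrable.of_mem_Icc 0 (-Real.logb 2 δ) ?_ (Eventually.of_forall fun x => ?_)
    · unfold Real.logb
      fun_prop
    · have hlog := logb_mem_Icc hδ (one_sub_mem_Icc (hp x))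
      exact ⟨neg_nonneg.2 hlog.2, neg_le_neg hlog.1⟩
  simp only [crossEnt_eq_mul_add]
  exact ⟨hslope.add hconst, integral_add hslope hconst⟩

theorem WeakTendsto.tendsto_integral_crossEnt [IsFiniteMeasure μ] {δ : ℝ}
    (h : WeakTendsto μ f F g) (hfm : ∀ i, Measurable (f i)) (hf : ∀ i x, f i x ∈ Icc (0 : ℝ) 1)
    (hgm : Measurable g) (hg : ∀ x, g x ∈ Icc (0 : ℝ) 1) (hpm : Measurable p) (hδ : 0 < δ)
    (hp : ∀ x, p x ∈ Icc δ (1 - δ)) :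
    Tendsto (fun i => ∫ x, crossEnt (f i x) (p x) ∂μ) F (𝓝 (∫ x, crossEnt (g x) (p x) ∂μ)) := by
  have hφ : MemLp (fun x => Real.logb 2 (1 - p x) - Real.logb 2 (p x)) 2 μ := by
    refine MemLp.of_bound ?_ (-Real.logb 2 δ)
      (Eventually.of_forall fun x => abs_logb_one_sub_sub_logb_le hδ (hp x))
    unfold Real.logb
    fun_prop
  rw [(integral_crossEnt hgm hg hpm hδ hp).2]
  simp only [(integral_crossEnt (hfm _) (hf _) hpm hδ hp).2]
  exact (h _ hφ).add_const _

theorem WeakTendsto.le_integral_binEnt [IsProbabilityMeasure μ] [F.NeBot]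
    (h : WeakTendsto μ f F g) (hfm : ∀ i, Measurable (f i)) (hf : ∀ i x, f i x ∈ Icc (0 : ℝ) 1)
    (hgm : Measurable g) (hg : ∀ x, g x ∈ Icc (0 : ℝ) 1) {c : ι → ℝ} {t : ℝ}
    (hct : Tendsto c F (𝓝 t)) (hcf : ∀ i, c i ≤ ∫ x, binEnt (f i x) ∂μ) :
    t ≤ ∫ x, binEnt (g x) ∂μ := by
  have hle : ∀ η ∈ Ioo (0 : ℝ) 1, t ≤ ∫ x, binEnt (g x) ∂μ - Real.logb 2 (1 - η) := fun η hη => by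
    let p : α → ℝ := fun x => (1 - η) * g x + η / 2
    have hpm : Measurable p := (hgm.const_mul _).add_const _
    have hδ : 0 < η / 2 := half_pos hη.1
    have hp : ∀ x, p x ∈ Icc (η / 2) (1 - η / 2) := fun x => by
      constructor <;> simp only [p] <;> nlinarith [(hg x).1, (hg x).2, hη.2]
    have hp' : ∀ x, p x ∈ Ioo (0 : ℝ) 1 := fun x =>
      ⟨hδ.trans_le (hp x).1, (hp x).2.trans_lt (sub_lt_self 1 hδ)⟩
    have hgibbs : ∀ i, ∫ x, binEnt (f i x) ∂μ ≤ ∫ x, crossEnt (f i x) (p x) ∂μ := fun i =>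
      integral_mono (integrable_binEnt_comp (hfm i) (hf i))
        (integral_crossEnt (hfm i) (hf i) hpm hδ hp).1 fun x => binEnt_le_crossEnt (hf i x) (hp' x)
    calc t ≤ ∫ x, crossEnt (g x) (p x) ∂μ :=
          le_of_tendsto_of_tendsto' hct (h.tendsto_integral_crossEnt hfm hf hgm hg hpm hδ hp)
            fun i => (hcf i).trans (hgibbs i)
      _ ≤ ∫ x, (binEnt (g x) - Real.logb 2 (1 - η)) ∂μ :=
          integral_mono (integral_crossEnt hgm hg hpm hδ hp).1
            ((integrable_binEnt_comp hgm hg).sub (integrable_const _))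
            fun x => crossEnt_shrink_le hη (hg x)
      _ = ∫ x, binEnt (g x) ∂μ - Real.logb 2 (1 - η) := by
          rw [integral_sub (integrable_binEnt_comp hgm hg) (integrable_const _)]
          simp
  have hcont : ContinuousAt (fun η : ℝ => ∫ x, binEnt (g x) ∂μ - Real.logb 2 (1 - η)) 0 := by
    unfold Real.logb
    fun_prop (disch := norm_num)
  have hlim := hcont.tendsto
  simp only [sub_zero, Real.logb_one] at hlim
  exact ge_of_tendsto (hlim.mono_left nhdsWithin_le_nhds)
    (eventually_of_mem (Ioo_mem_nhdsGT one_pos) hle)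

end EntropySemicontinuity

section GraphonLimit

theorem graphonEnt_eq_integral {W : ℝ → ℝ → ℝ} (hW : IsGraphon W) :
    graphonEnt W = ∫ p, binEnt (W p.1 p.2) ∂squareVolume :=
  (integral_prod _ (integrable_binEnt_comp hW.2.1 fun p => hW.2.2 p.1 p.2)).symm

theorem graphonEnt_le_one {W : ℝ → ℝ → ℝ} (hW : IsGraphon W) : graphonEnt W ≤ 1 := by
  rw [graphonEnt_eq_integral hW]
  calc ∫ p, binEnt (W p.1 p.2) ∂squareVolume ≤ ∫ _, 1 ∂squareVolume :=
        integral_mono (integrable_binEnt_comp hW.2.1 fun p => hW.2.2 p.1 p.2) (integrable_const _)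
          fun p => (binEnt_mem_Icc (hW.2.2 p.1 p.2)).2
    _ = 1 := by simp

variable {ι : Type*} {F : Filter ι} {U : ι → ℝ → ℝ → ℝ} {W : ℝ → ℝ → ℝ}

theorem WeakTendsto.comp_swap {α : Type*} [MeasurableSpace α] {ν : Measure α} [SFinite ν]
    {f : ι → α × α → ℝ} {g : α × α → ℝ} (h : WeakTendsto (ν.prod ν) f F g) :
    WeakTendsto (ν.prod ν) (fun i p => f i p.swap) F (fun p => g p.swap) := fun φ hφ => by
  have hint : ∀ k : α × α → ℝ, ∫ p, k p * φ p.swap ∂ν.prod ν = ∫ p, k p.swap * φ p ∂ν.prod ν :=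
    fun k => by
      rw [← integral_prod_swap]
      simp only [Prod.swap_swap]
  have hlim := h _ (hφ.comp_measurePreserving Measure.measurePreserving_swap)
  simpa only [Function.comp_apply, hint] using hlim

theorem exists_isGraphon_weakTendsto (𝒰 : Ultrafilter ι) (hU : ∀ i, IsGraphon (U i)) :
    ∃ W, IsGraphon W ∧ WeakTendsto squareVolume (fun i p => U i p.1 p.2) 𝒰
      (fun p => W p.1 p.2) := by
  obtain ⟨g, hgm, hg, hlim⟩ := exists_weakTendsto (μ := squareVolume)
    (f := fun i p => U i p.1 p.2) 𝒰 (fun i => (hU i).2.1) fun i p => (hU i).2.2 p.1 p.2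
  have hswap : WeakTendsto squareVolume (fun i p => U i p.1 p.2) 𝒰 (fun p => g p.swap) := by
    simpa only [Prod.fst_swap, Prod.snd_swap, (hU _).1 (Prod.snd _)] using hlim.comp_swap
  refine ⟨fun x y => (g (x, y) + g (y, x)) / 2, ⟨fun x y => congrArg (· / 2) (add_comm _ _),
    (hgm.add (hgm.comp measurable_swap)).div_const 2, fun x y => ?_⟩, fun φ hφ => ?_⟩
  · constructor <;> linarith [(hg (x, y)).1, (hg (x, y)).2, (hg (y, x)).1, (hg (y, x)).2]
  · have hint : ∀ {k : ℝ × ℝ → ℝ}, Measurable k → (∀ p, k p ∈ Icc (0 : ℝ) 1) →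
        Integrable (fun p => k p * φ p) squareVolume := fun {k} hkm hk =>
      (hφ.integrable one_le_two).bdd_mul (c := 1) hkm.aestronglyMeasurable
        (Eventually.of_forall fun p => by rw [Real.norm_of_nonneg (hk p).1]; exact (hk p).2)
    have havg : ∫ p, (g p + g p.swap) / 2 * φ p ∂squareVolume = ∫ p, g p * φ p ∂squareVolume := by
      simp only [div_mul_eq_mul_div, add_mul]
      rw [integral_div, integral_add (hint hgm hg)
        (hint (k := fun p => g p.swap) (hgm.comp measurable_swap) fun p => hg _),
        tendsto_nhds_unique (hswap φ hφ) (hlim φ hφ), add_self_div_two]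
    exact havg.symm ▸ hlim φ hφ

theorem WeakTendsto.dCut_le [F.NeBot] (hU : ∀ i, IsGraphon (U i)) (hW : IsGraphon W)
    (h : WeakTendsto squareVolume (fun i p => U i p.1 p.2) F (fun p => W p.1 p.2))
    {V : ℝ → ℝ → ℝ} (hV : IsGraphon V) {δ : ℝ} (hδ : ∀ᶠ i in F, dCut V (U i) ≤ δ) :
    dCut V W ≤ δ := by
  refine cutNorm_le fun S T hSm hTm hS hT => ?_
  have hlim := ((h.setIntegral (hSm.prod hTm)).const_sub
    (∫ p in S ×ˢ T, V p.1 p.2 ∂squareVolume)).abs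
  rw [integral_sub hV.integrable hW.integrable]
  refine le_of_tendsto hlim (hδ.mono fun i hi => le_trans ?_ hi)
  rw [← integral_sub hV.integrable (hU i).integrable]
  exact abs_setIntegral_le_cutNorm (U := fun x y => V x y - U i x y)
    (hV.integrable.sub (hU i).integrable) hSm hTm hS hT

end GraphonLimit

section MonotoneCodes

theorem measureReal_symmDiff_of_subset_total {α : Type*} [MeasurableSpace α] (μ : Measure α)
    [IsFiniteMeasure μ] {s t : Set α} (hs : MeasurableSet s) (ht : MeasurableSet t)
    (hst : s ⊆ t ∨ t ⊆ s) : μ.real (symmDiff s t) = |μ.real s - μ.real t| := by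
  wlog h : s ⊆ t generalizing s t
  · rw [symmDiff_comm, abs_sub_comm]
    exact this ht hs hst.symm (hst.resolve_left h)
  rw [symmDiff_of_le h, abs_sub_comm, abs_of_nonneg (sub_nonneg.2 (measureReal_mono h))]
  exact measureReal_sdiff h hs

theorem measureReal_ne_le_sum {α κ : Type*} [LinearOrder α] [TopologicalSpace α]
    [OrderTopology α] [MeasurableSpace α] [BorelSpace α] (μ : Measure α)
    [IsFiniteMeasure μ] [LinearOrder κ] [Fintype κ] {f g : α → κ} (hf : Monotone f)
    (hg : Monotone g) :
    μ.real {x | f x ≠ g x} ≤ ∑ a, |μ.real (f ⁻¹' Iic a) - μ.real (g ⁻¹' Iic a)| := by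
  have hlower : ∀ {f : α → κ}, Monotone f → ∀ a, IsLowerSet (f ⁻¹' Iic a) :=
    fun hf a => (isLowerSet_Iic a).preimage hf
  have hcover : {x | f x ≠ g x} ⊆ ⋃ a, symmDiff (f ⁻¹' Iic a) (g ⁻¹' Iic a) := fun x hx => by
    simp only [mem_iUnion, mem_symmDiff, mem_preimage, mem_Iic, not_le]
    rcases lt_or_gt_of_ne hx with h | h
    · exact ⟨f x, .inl ⟨le_rfl, h⟩⟩
    · exact ⟨g x, .inr ⟨le_rfl, h⟩⟩
  calc μ.real {x | f x ≠ g x} ≤ ∑ a, μ.real (symmDiff (f ⁻¹' Iic a) (g ⁻¹' Iic a)) :=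
        (measureReal_mono hcover).trans (measureReal_iUnion_fintype_le _)
    _ = ∑ a, |μ.real (f ⁻¹' Iic a) - μ.real (g ⁻¹' Iic a)| :=
        Finset.sum_congr rfl fun a _ => measureReal_symmDiff_of_subset_total μ
          (hlower hf a).ordConnected.measurableSet (hlower hg a).ordConnected.measurableSet
          ((hlower hf a).total (hlower hg a))

variable {κ : Type*} {l : ℕ}

theorem BlockModel.isGraphon_weight [Countable κ] [MeasurableSpace κ] [MeasurableSingletonClass κ]
    (b : BlockModel κ l ℝ) (hb : Measurable b.1) : IsGraphon b.weight :=
  ⟨b.weight_comm, measurable_comp₂_of_countable (fun i j => palette l (b.2 s(i, j)))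
    (hb.comp measurable_fst) (hb.comp measurable_snd),
    fun x y => Ioo_subset_Icc_self (b.weight_mem_Ioo x y)⟩

theorem BlockModel.abs_weight_sub_weight_le {α : Type*} {b b' : BlockModel κ l α}
    (hq : b.2 = b'.2) (x y : α) : |b.weight x y - b'.weight x y| ≤
      {x | b.1 x ≠ b'.1 x}.indicator 1 x + {x | b.1 x ≠ b'.1 x}.indicator 1 y := by
  by_cases hxy : b.1 x = b'.1 x ∧ b.1 y = b'.1 y
  · simp [weight, hq, hxy]
  · have hle : |b.weight x y - b'.weight x y| ≤ 1 := abs_le.2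
      ⟨by linarith [(b.weight_mem_Ioo x y).1, (b'.weight_mem_Ioo x y).2],
        by linarith [(b.weight_mem_Ioo x y).2, (b'.weight_mem_Ioo x y).1]⟩
    rw [not_and_or] at hxy
    refine hle.trans ?_
    rcases hxy with h | h
    · rw [indicator_of_mem (show x ∈ {x | b.1 x ≠ b'.1 x} from h)]
      exact le_add_of_nonneg_right (indicator_nonneg (fun _ _ => zero_le_one) y)
    · rw [indicator_of_mem (show y ∈ {x | b.1 x ≠ b'.1 x} from h)]
      exact le_add_of_nonneg_left (indicator_nonneg (fun _ _ => zero_le_one) x)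

theorem BlockModel.dCut_weight_le [Countable κ] [MeasurableSpace κ] [MeasurableSingletonClass κ]
    {b b' : BlockModel κ l ℝ} (hb : Measurable b.1) (hb' : Measurable b'.1) (hq : b.2 = b'.2) :
    dCut b.weight b'.weight ≤ 2 * unitVolume.real {x | b.1 x ≠ b'.1 x} := by
  have hne : MeasurableSet {x | b.1 x ≠ b'.1 x} := (measurableSet_eq_fun hb hb').compl
  have hint : Integrable ({x | b.1 x ≠ b'.1 x}.indicator (1 : ℝ → ℝ)) unitVolume :=
    (integrable_const 1).indicator hne
  have hsub : Integrable (fun p : ℝ × ℝ => b.weight p.1 p.2 - b'.weight p.1 p.2) squareVolume :=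
    (b.isGraphon_weight hb).integrable.sub (b'.isGraphon_weight hb').integrable
  refine (cutNorm_le_integral_abs hsub).trans ?_
  refine (integral_mono hsub.abs ((hint.comp_fst _).add (hint.comp_snd _)) fun p =>
    abs_weight_sub_weight_le hq p.1 p.2).trans_eq ?_
  rw [integral_add' (hint.comp_fst _) (hint.comp_snd _), integral_fun_fst, integral_fun_snd,
    integral_indicator_one hne]
  simp [two_mul]

theorem BlockModel.eventually_dCut_weight_le {ι : Type*} {K : ℕ} (𝒰 : Ultrafilter ι)
    {b : ι → BlockModel (Fin K) l ℝ} (hb : ∀ᶠ j in 𝒰, Monotone (b j).1) {δ : ℝ} (hδ : 0 < δ) :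
    ∀ᶠ j in 𝒰, ∀ᶠ k in 𝒰, dCut (b j).weight (b k).weight ≤ δ := by
  obtain ⟨q, hq⟩ : ∃ q, ∀ᶠ j in 𝒰, (b j).2 = q :=
    𝒰.eventually_exists_iff.1 (Eventually.of_forall fun j => ⟨_, rfl⟩)
  let t : ι → Fin K → ℝ := fun j a => unitVolume.real ((b j).1 ⁻¹' Iic a)
  obtain ⟨τ, hτ⟩ : ∃ τ, Tendsto t 𝒰 (𝓝 τ) := by
    have ht : ∀ j, t j ∈ Icc 0 1 := fun j =>
      ⟨fun _ => measureReal_nonneg, fun _ => measureReal_le_one⟩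
    obtain ⟨τ, -, hτ⟩ := isCompact_Icc.ultrafilter_le_nhds (𝒰.map t)
      (tendsto_principal.2 (Eventually.of_forall ht))
    exact ⟨τ, hτ⟩
  have hsum : ∀ᶠ j in 𝒰, ∑ a, |t j a - τ a| < δ / 4 := by
    have hlim : Tendsto (fun j => ∑ a, |t j a - τ a|) 𝒰 (𝓝 (∑ a, |τ a - τ a|)) :=
      tendsto_finsetSum _ fun a _ => ((tendsto_pi_nhds.1 hτ a).sub_const _).abs
    simp only [sub_self, abs_zero, Finset.sum_const_zero] at hlim
    exact hlim.eventually_lt_const (by linarith)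
  have hgood := hb.and (hq.and hsum)
  refine hgood.mono fun j ⟨hj, hqj, htj⟩ => hgood.mono fun k ⟨hk, hqk, htk⟩ => ?_
  calc dCut (b j).weight (b k).weight ≤ 2 * unitVolume.real {x | (b j).1 x ≠ (b k).1 x} :=
        dCut_weight_le hj.measurable hk.measurable (hqj.trans hqk.symm)
    _ ≤ 2 * ∑ a, |t j a - t k a| := by
        gcongr
        exact measureReal_ne_le_sum unitVolume hj hk
    _ ≤ 2 * (∑ a, |t j a - τ a| + ∑ a, |t k a - τ a|) := by
        rw [← Finset.sum_add_distrib]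
        gcongr with a
        rw [abs_sub_comm (t k a)]
        exact abs_sub_le _ _ _
    _ ≤ δ := by linarith [htj, htk]

end MonotoneCodes

section LimitGraphons

variable {ι : Type*} {F : Filter ι} {Q : GraphClass} {t ε : ℝ}

theorem mem_limitSet_of_forall_eventually_dCut_le [F.NeBot] {W : ℝ → ℝ → ℝ} (hW : IsGraphon W)
    {n : ι → ℕ} {G : ∀ i, SimpleGraph (Fin (n i))} (hG : ∀ i, G i ∈ Q (n i))
    (hn : Tendsto n F atTop)
    (hlim : ∀ δ > 0, ∀ᶠ i in F, dCut (graphonOfGraph (G i)) W ≤ δ) : W ∈ limitSet Q := by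
  have hclose : ∀ k : ℕ, ∃ i, k ≤ n i ∧ dCut (graphonOfGraph (G i)) W ≤ 1 / ((k : ℝ) + 1) :=
    fun k => ((hn.eventually_ge_atTop k).and (hlim _ (by positivity))).exists
  choose i hni hGi using hclose
  refine ⟨hW, n ∘ i, fun k => G (i k), fun k => hG _, tendsto_atTop_mono hni tendsto_id, ?_⟩
  exact squeeze_zero (fun _ => deltaCut_nonneg _ _)
    (fun k => (deltaCut_le_dCut _ _).trans (hGi k)) tendsto_one_div_add_atTop_nhds_zero_nat

theorem eventually_dCut_weight_self_le (𝒰 : Ultrafilter ℕ) (h𝒰 : (𝒰 : Filter ℕ) ≤ atTop)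
    {K : ℕ → ℕ} {Γ : ℕ → ℝ → ℝ → ℝ} (hΓ : ∀ m, IsGraphon (Γ m))
    {b : ∀ _ l, BlockModel (Fin (K l)) l ℝ} (hmono : ∀ m, ∀ l ≤ m, Monotone (b m l).1)
    (hdist : ∀ m, ∀ l ≤ m, dCut (Γ m) (b m l).weight ≤ 2 / (l + 1)) {δ : ℝ} (hδ : 0 < δ) :
    ∀ᶠ j in 𝒰, ∀ᶠ k in 𝒰, dCut (Γ j) (b k k).weight ≤ δ := by
  have hgraphon : ∀ m, ∀ l ≤ m, IsGraphon (b m l).weight := fun m l hlm =>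
    (b m l).isGraphon_weight (hmono m l hlm).measurable
  obtain ⟨l, hl⟩ : ∃ l : ℕ, 2 / ((l : ℝ) + 1) ≤ δ / 4 := by
    obtain ⟨l, hl⟩ := exists_nat_one_div_lt (show 0 < δ / 8 by positivity)
    exact ⟨l, by rw [← mul_one_div]; linarith⟩
  have hlarge : ∀ᶠ m in 𝒰, l ≤ m := h𝒰 (eventually_ge_atTop l)
  have hlevel := BlockModel.eventually_dCut_weight_le (b := fun m => b m l) 𝒰
    (hlarge.mono fun m hlm => hmono m l hlm) (show 0 < δ / 4 by positivity)
  filter_upwards [hlarge, hlevel] with j hlj hj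
  filter_upwards [hlarge, hj] with k hlk hjk
  have hfine : 2 / ((k : ℝ) + 1) ≤ 2 / (l + 1) := by gcongr
  calc dCut (Γ j) (b k k).weight
      ≤ dCut (Γ j) (b j l).weight + (dCut (b j l).weight (b k l).weight +
          (dCut (b k l).weight (Γ k) + dCut (Γ k) (b k k).weight)) := by
        refine (dCut_triangle (hΓ j) (hgraphon j l hlj) (hgraphon k k le_rfl)).trans ?_
        gcongr
        refine (dCut_triangle (hgraphon j l hlj) (hgraphon k l hlk) (hgraphon k k le_rfl)).trans ?_
        gcongr
        exact dCut_triangle (hgraphon k l hlk) (hΓ k) (hgraphon k k le_rfl)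
    _ ≤ δ := by
        rw [dCut_comm (b k l).weight]
        linarith [hdist j l hlj, hdist k l hlk, hdist k k le_rfl]

theorem IsRegularModel.dCut_graphonOfGraph_le {κ : Type*} {n l : ℕ} [NeZero n]
    {G : SimpleGraph (Fin n)} {b : BlockModel κ l (Fin n)}
    (h : IsRegularModel (adjIndicator G) b) :
    dCut (graphonOfGraph G) (b.comap (gridIndex n)).weight ≤ 2 / (l + 1) :=
  _root_.dCut_graphonOfGraph_le G (by simpa only [Fintype.card_fin] using h.cutBounded)

theorem IsRegularModel.sub_roundingLoss_le_graphonEnt {κ : Type*} {n l : ℕ} [NeZero n]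
    {A : Fin n → Fin n → ℝ} {b : BlockModel κ l (Fin n)} (h : IsRegularModel A b)
    (ht : (n : ℝ) ^ 2 * t ≤ ∑ v, ∑ w, crossEnt (A v w) (b.weight v w)) :
    t - roundingLoss l ≤ graphonEnt (b.comap (gridIndex n)).weight := by
  have hn : (0 : ℝ) < n ^ 2 := pow_pos (Nat.cast_pos.2 (NeZero.pos n)) 2
  have hgraphon : IsGraphon (b.comap (gridIndex n)).weight :=
    ⟨BlockModel.weight_comm _, measurable_comp₂_of_countable b.weight
      (measurable_gridIndex.comp measurable_fst) (measurable_gridIndex.comp measurable_snd),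
      fun x y => Ioo_subset_Icc_self (BlockModel.weight_mem_Ioo _ x y)⟩
  have hle := ht.trans h.sum_crossEnt_le
  rw [Fintype.card_fin] at hle
  rw [graphonEnt_eq_integral hgraphon]
  refine le_of_le_of_eq ?_ (integral_gridIndex fun v w => binEnt (b.weight v w)).symm
  rw [le_div_iff₀ hn]
  linarith

theorem exists_mem_forall_blockModel_lt {κ : Type*} [Finite κ] [Nonempty κ] (l : ℕ) (hε : 0 < ε)
    (hQ : ∃ᶠ n in atTop, (2 : ℝ) ^ ((t + ε) * choose2 n) < Nat.card (Q n)) (m : ℕ) :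
    ∃ n ≥ m, ∃ G ∈ Q n, ∀ b : BlockModel κ l (Fin n),
      (n : ℝ) ^ 2 * t < ∑ v, ∑ w, crossEnt (adjIndicator G v w) (b.weight v w) := by
  obtain ⟨n, hn, hmn, hcard⟩ := (hQ.and_eventually
    ((eventually_ge_atTop m).and (eventually_card_blockModel_mul_le (κ := κ) l t hε))).exists
  refine ⟨n, hmn, ?_⟩
  by_contra! hcheap
  exact (hn.trans_le (ncard_le_of_exists_blockModel hcheap)).not_ge hcard

theorem exists_mem_forall_exists_monotone_blockModel (hQ : IsGraphClass Q) (hε : 0 < ε)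
    (hcard : ∃ᶠ n in atTop, (2 : ℝ) ^ ((t + ε) * choose2 n) < Nat.card (Q n)) (m : ℕ) :
    ∃ n ≥ m, ∃ G ∈ Q n, ∃ b : ∀ l, BlockModel (Fin (blockCount l)) l ℝ,
      (∀ l ≤ m, Monotone (b l).1 ∧ dCut (graphonOfGraph G) (b l).weight ≤ 2 / (l + 1)) ∧
      t - roundingLoss m ≤ graphonEnt (b m).weight := by
  obtain ⟨n, hmn, G, hG, hcost⟩ :=
    exists_mem_forall_blockModel_lt (κ := Fin (blockCount m)) m hε hcard (m + 1)
  have : NeZero n := ⟨by lia⟩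
  obtain ⟨π, hπ⟩ := exists_perm_isRegularModel (adjIndicator_mem_Icc G) (adjIndicator_comm G) m
  choose! b hmono hreg using hπ
  refine ⟨n, by lia, G.comap π, hQ n π G hG, fun l => (b l).comap (gridIndex n), fun l hl =>
    ⟨(hmono l hl).comp monotone_gridIndex, (hreg l hl).dCut_graphonOfGraph_le⟩,
    (hreg m le_rfl).sub_roundingLoss_le_graphonEnt ?_⟩
  have hperm := (hcost ((b m).comap π.symm)).le
  rw [← sum_sum_comp_equiv π] at hperm
  simpa [BlockModel.weight, BlockModel.comap] using hperm

theorem exists_mem_limitSet_le_graphonEnt (hQ : IsGraphClass Q) (hε : 0 < ε)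
    (hcard : ∃ᶠ n in atTop, (2 : ℝ) ^ ((t + ε) * choose2 n) < Nat.card (Q n)) :
    ∃ W ∈ limitSet Q, t ≤ graphonEnt W := by
  choose n hn G hG b hb hent using exists_mem_forall_exists_monotone_blockModel hQ hε hcard
  have h𝒰 : (hyperfilter ℕ : Filter ℕ) ≤ atTop := Nat.hyperfilter_le_atTop
  have hU : ∀ m, IsGraphon (b m m).weight := fun m =>
    (b m m).isGraphon_weight (hb m m le_rfl).1.measurable
  obtain ⟨W, hW, hlim⟩ := exists_isGraphon_weakTendsto (hyperfilter ℕ) hU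
  refine ⟨W, mem_limitSet_of_forall_eventually_dCut_le hW hG
    ((tendsto_atTop_mono hn tendsto_id).mono_left h𝒰) fun δ hδ => ?_, ?_⟩
  · filter_upwards [eventually_dCut_weight_self_le _ h𝒰 (fun m => isGraphon_graphonOfGraph (G m))
      (fun m l hl => (hb m l hl).1) (fun m l hl => (hb m l hl).2) hδ] with j hj
    exact hlim.dCut_le hU hW (isGraphon_graphonOfGraph (G j)) hj
  · have hloss : Tendsto (fun m => t - roundingLoss m) (hyperfilter ℕ) (𝓝 t) := by
      simpa only [sub_zero] using (tendsto_roundingLoss.const_sub t).mono_left h𝒰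
    simp only [graphonEnt_eq_integral (hU _)] at hent
    rw [graphonEnt_eq_integral hW]
    exact hlim.le_integral_binEnt (fun m => (hU m).2.1) (fun m p => (hU m).2.2 p.1 p.2) hW.2.1
      (fun p => hW.2.2 p.1 p.2) hloss hent

end LimitGraphons

/-- Theorem 1.1: for any graph class `Q`,
`limsup_n log₂|Q_n| / C(n,2) ≤ sup_{W ∈ Q̂} Ent(W)`; equivalently, for every `ε > 0` and
all sufficiently large `n`, `|Q_n| ≤ 2^{(s+ε) C(n,2)}`. -/
theorem stmt9 (Q : GraphClass) (hQ : IsGraphClass Q) (hne : (limitSet Q).Nonempty) :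
    ∀ ε : ℝ, 0 < ε → ∃ N : ℕ, ∀ n ≥ N,
      (Nat.card ↥(Q n) : ℝ) ≤
        (2 : ℝ) ^ ((sSup (graphonEnt '' limitSet Q) + ε) * choose2 n) := by
  intro ε hε
  by_contra! hlarge
  have hfreq : ∃ᶠ n in atTop, (2 : ℝ) ^ ((sSup (graphonEnt '' limitSet Q) + ε / 2 + ε / 2) *
      choose2 n) < Nat.card (Q n) := by
    simpa only [add_assoc, add_halves, frequently_atTop] using hlarge
  obtain ⟨W, hW, hent⟩ := exists_mem_limitSet_le_graphonEnt hQ (half_pos hε) hfreq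
  have hbdd : BddAbove (graphonEnt '' limitSet Q) :=
    ⟨1, forall_mem_image.2 fun _ hV => graphonEnt_le_one hV.1⟩
  linarith [le_csSup hbdd (mem_image_of_mem graphonEnt hW)]
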